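/- arXiv:2405.00778 — 5 statements merged into one kernel-verified Lean document; each statement's English description precedes it below -/
import Mathlib

section
/- Let n ≥ 1 and 0 ≤ d ≤ n, and let E = {2-element subsets of [n]} ⊔ [n] be the common ground set. For every subset S ⊆ E, the columns of the matrix J_Sym indexed by S are linearly independent (i.e., S is independent in the symmetric matrix completion matroid 𝒮_n(d)) if and only if the span over K' of the vectors {p_e : e ∈ E ∖ S} has dimension binom(n−d+1, 2) (i.e., E ∖ S is spanning in the symmetric power matroid S_n(n−d, 0)). In matroid language: the symmetric power matroid S_n(n−d, 0) is the dual of the symmetric matrix completion matroid 𝒮_n(d). -/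
open scoped Classical

noncomputable section

/-- The rational function field `ℚ(x_{ij} : i ∈ [n], j ∈ [d])`. -/
abbrev SymK (n d : ℕ) := FractionRing (MvPolynomial (Fin n × Fin d) ℚ)

noncomputable def Xv (n d : ℕ) (i : Fin n) (j : Fin d) : SymK n d :=
  algebraMap (MvPolynomial (Fin n × Fin d) ℚ) (SymK n d) (MvPolynomial.X (i, j))

/-- The column of `J_Sym` labeled by `e`: the ground set of `𝒮_n(d)`, the 2-element
subsets of `[n]` together with the elements of `[n]`, is encoded as `Sym2 (Fin n)`,
with the off-diagonal element `s(i,k)` encoding the subset `{i,k}` and the diagonal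
element `s(i,i)` encoding `i ∈ [n]`.  The row labeled `(i,j)` has entry `2·x_{ij}` in
the column labeled `i`, entry `x_{kj}` in the column labeled `{i,k}`, and `0`
elsewhere. -/
noncomputable def colJSym (n d : ℕ) (e : Sym2 (Fin n)) : Fin n × Fin d → SymK n d :=
  fun row =>
    Sym2.lift
      ⟨fun a b => (if a = row.1 then Xv n d b row.2 else 0) +
                  (if b = row.1 then Xv n d a row.2 else 0),
       fun a b => add_comm _ _⟩ e

/-- The field `K'`: fractions of the polynomial ring over `ℚ` in the variables
`v_{ik}` (`i ∈ [n]`, `k ∈ [n-d]`). -/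
abbrev SymK' (n c : ℕ) := FractionRing (MvPolynomial (Fin n × Fin c) ℚ)

noncomputable def vv (n c : ℕ) (i : Fin n) (k : Fin c) : SymK' n c :=
  algebraMap (MvPolynomial (Fin n × Fin c) ℚ) (SymK' n c) (MvPolynomial.X (i, k))

/-- The vector `p_e ∈ K'^{[n-d]×[n-d]}` realizing the symmetric product of the totally
generic vectors: for `e = {i,j}` with `i ≠ j` its `(k,l)`-entry is
`v_{ik}v_{jl} + v_{jk}v_{il}` (realizing `v_i ⊗ v_j + v_j ⊗ v_i`), and for the
diagonal element `e = i ∈ [n]` its `(k,l)`-entry is `v_{ik}v_{il}`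
(realizing `v_i ⊗ v_i`). -/
noncomputable def pVec (n c : ℕ) (e : Sym2 (Fin n)) : Fin c × Fin c → SymK' n c :=
  fun kl =>
    Sym2.lift
      ⟨fun a b =>
        if a = b then vv n c a kl.1 * vv n c a kl.2
        else vv n c a kl.1 * vv n c b kl.2 + vv n c b kl.1 * vv n c a kl.2,
       fun a b => by
        rcases eq_or_ne a b with h | h
        · subst h; rfl
        · simp only [if_neg h, if_neg h.symm]; ring⟩ e

/-!
Let `X` be an `n × d` matrix of rank `d` and `V` an `n × (n - d)` matrix whose columns form a basis
of the kernel of `Xᵀ`.  A linear relation between the columns of `J_Sym`, evaluated at `X`, is a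
symmetric matrix `M` with `M X = 0`, and such `M` are exactly the products `V A Vᵀ` with `A`
symmetric.  Up to factors of two on the diagonal, the entries of `V A Vᵀ` are the values of `A`,
viewed as a linear functional on symmetric tensors, at the products `v_i v_j`.  Hence a relation
supported on `S` is the same as a functional vanishing on the products indexed by the complement of
`S`: columns indexed by `S` are independent iff the complementary products span.

The generic `X` and the generic `V` are not related in this way, but independence and spanning hold
generically as soon as they hold for one matrix.  So each implication follows by completing one
generic matrix to such a pair and regarding its partner as a specialization of the other.
-/

section LinearAlgebra

open scoped Matrix

variable {F l m n : Type*} [Field F]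

lemma linearIndependent_col_iff_rank_eq_card [Fintype n] (A : Matrix m n F) :
    LinearIndependent F A.col ↔ A.rank = Fintype.card n := by
  rw [linearIndependent_iff_card_eq_finrank_span, Matrix.rank_eq_finrank_span_cols, eq_comm,
    Set.finrank]

lemma linearIndepOn_col_iff {R : Type*} [CommRing R] [Fintype n] (A : Matrix m n R) (S : Set n) :
    LinearIndepOn R A.col S ↔ ∀ w : n → R, (∀ j ∉ S, w j = 0) → A.mulVec w = 0 → w = 0 := by
  have hcomb (w : n →₀ R) : Finsupp.linearCombination R A.col w = A.mulVec w := by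
    ext i
    simp [Finsupp.linearCombination_apply, Finsupp.sum_fintype, Matrix.mulVec, dotProduct, mul_comm]
  simp only [linearIndepOn_iff, Finsupp.equivFunOnFinite.forall_congr_left,
    Finsupp.mem_supported', hcomb, Finsupp.coe_equivFunOnFinite_symm, ← Finsupp.coe_eq_zero]

lemma span_row_image_eq_top_iff [Finite m] [Finite n] (A : Matrix m n F) (T : Set m) :
    Submodule.span F (A.row '' T) = ⊤ ↔
      LinearIndependent F (A.submatrix (Subtype.val : T → m) id).col := by
  cases nonempty_fintype n
  rw [linearIndependent_col_iff_rank_eq_card, Matrix.rank_eq_finrank_span_row,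
    ← Module.finrank_fintype_fun_eq_card F, Set.image_eq_range]
  exact ⟨fun h => (LinearEquiv.ofTop _ h).finrank_eq, Submodule.eq_top_of_finrank_eq⟩

lemma linearIndepOn_col_iff_span_row_compl_eq_top [Fintype m] [Fintype n]
    {A : Matrix l m F} {B : Matrix m n F} (hB : Function.Injective B.mulVec)
    (hBA : Function.Exact B.mulVec A.mulVec) (S : Set m) :
    LinearIndepOn F A.col S ↔ Submodule.span F (B.row '' Sᶜ) = ⊤ := by
  have hsub (a : n → F) : (B.submatrix (Subtype.val : ↥Sᶜ → m) id).mulVec a = 0 ↔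
      ∀ j ∉ S, B.mulVec a j = 0 := by
    rw [funext_iff, Subtype.forall]
    rfl
  have hinj := injective_iff_map_eq_zero (B.submatrix (Subtype.val : ↥Sᶜ → m) id).mulVecLin
  simp only [Matrix.coe_mulVecLin, hsub] at hinj
  rw [linearIndepOn_col_iff, span_row_image_eq_top_iff, ← Matrix.mulVec_injective_iff, hinj]
  constructor
  · intro h a ha
    exact hB ((h _ ha (hBA.apply_apply_eq_zero a)).trans (Matrix.mulVec_zero B).symm)
  · intro h w hw hAw
    obtain ⟨a, rfl⟩ := (hBA w).1 hAw
    rw [h a hw, Matrix.mulVec_zero]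

lemma exact_mulVec_iff [Finite l] [Fintype m] [Fintype n] {A : Matrix l m F} {B : Matrix m n F} :
    Function.Exact B.mulVec A.mulVec ↔ A * B = 0 ∧ A.rank + B.rank = Fintype.card m := by
  have hzero : A * B = 0 ↔ LinearMap.range B.mulVecLin ≤ LinearMap.ker A.mulVecLin := by
    rw [LinearMap.range_le_ker_iff, ← Matrix.mulVecLin_mul, ← Matrix.mulVecLin_zero,
      ← (DFunLike.coe_injective (F := (n → F) →ₗ[F] l → F)).eq_iff,
      Matrix.coe_mulVecLin, Matrix.coe_mulVecLin, Matrix.mulVec_injective.eq_iff]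
  have hrank := A.mulVecLin.finrank_range_add_finrank_ker
  rw [Module.finrank_fintype_fun_eq_card] at hrank
  rw [← Matrix.coe_mulVecLin, ← Matrix.coe_mulVecLin, LinearMap.exact_iff, hzero, ← hrank,
    Matrix.rank, Matrix.rank, add_right_inj]
  exact ⟨fun h => ⟨h.ge, by rw [h]⟩, fun h => (Submodule.eq_of_le_of_finrank_eq h.1 h.2).symm⟩

lemma exact_mulVec_transpose_iff [Fintype l] [Fintype m] [Fintype n]
    {A : Matrix l m F} {B : Matrix m n F} :
    Function.Exact Aᵀ.mulVec Bᵀ.mulVec ↔ Function.Exact B.mulVec A.mulVec := by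
  rw [exact_mulVec_iff, exact_mulVec_iff, ← Matrix.transpose_mul, Matrix.transpose_eq_zero,
    Matrix.rank_transpose, Matrix.rank_transpose, add_comm]

lemma exists_mul_eq_of_exact {R o : Type*} [CommRing R] [Fintype m] [Fintype n]
    {A : Matrix l m R} {B : Matrix m n R} (hBA : Function.Exact B.mulVec A.mulVec)
    {C : Matrix m o R} (hC : A * C = 0) : ∃ D : Matrix n o R, B * D = C := by
  have hcol (j : o) : ∃ d, B.mulVec d = C.col j :=
    (hBA _).1 (funext fun i => congrFun₂ hC i j)
  choose D hD using hcol
  exact ⟨(Matrix.of D)ᵀ, Matrix.ext_col hD⟩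

lemma exists_mul_eq_one_of_mulVec_injective [Fintype m] [Fintype n] [DecidableEq n]
    {B : Matrix m n F} (hB : Function.Injective B.mulVec) : ∃ U : Matrix n m F, U * B = 1 := by
  classical
  obtain ⟨g, hg⟩ := B.mulVecLin.exists_leftInverse_of_injective (LinearMap.ker_eq_bot.2 hB)
  refine ⟨LinearMap.toMatrix' g, ?_⟩
  rw [← LinearMap.toMatrix'_id, ← hg, LinearMap.toMatrix'_comp, ← Matrix.toLin'_apply',
    LinearMap.toMatrix'_toLin']

lemma exists_isSymm_mul_mul_transpose_eq [Fintype m] [Fintype n] {X : Matrix m l F}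
    {V : Matrix m n F} (hV : Function.Injective V.mulVec)
    (hVX : Function.Exact V.mulVec Xᵀ.mulVec) {M : Matrix m m F} (hM : M.IsSymm)
    (hMX : M * X = 0) : ∃ A : Matrix n n F, A.IsSymm ∧ V * A * Vᵀ = M := by
  classical
  have hXM : Xᵀ * M = 0 := by
    rw [← hM.eq, ← Matrix.transpose_mul, hMX, Matrix.transpose_zero]
  obtain ⟨U, hU⟩ := exists_mul_eq_one_of_mulVec_injective hV
  obtain ⟨B, hB⟩ := exists_mul_eq_of_exact hVX hXM
  have hVU : V * (U * M) = M := by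
    rw [← hB, ← Matrix.mul_assoc U, hU, Matrix.one_mul]
  have hUV : M * Uᵀ * Vᵀ = M := by
    simpa only [Matrix.transpose_mul, hM.eq] using congrArg Matrix.transpose hVU
  refine ⟨U * M * Uᵀ, ?_, ?_⟩
  · simp only [Matrix.IsSymm, Matrix.transpose_mul, Matrix.transpose_transpose, hM.eq,
      Matrix.mul_assoc]
  · calc V * (U * M * Uᵀ) * Vᵀ
        = V * (U * M) * Uᵀ * Vᵀ := by simp only [Matrix.mul_assoc]
      _ = M := by rw [hVU, hUV]

lemma exists_injective_exact_mulVec [Finite l] [Fintype m] [Fintype n] (A : Matrix l m F)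
    (h : A.rank + Fintype.card n = Fintype.card m) :
    ∃ B : Matrix m n F, Function.Injective B.mulVec ∧ Function.Exact B.mulVec A.mulVec := by
  have hker : Module.finrank F (LinearMap.ker A.mulVecLin) = Fintype.card n := by
    have hrank := A.mulVecLin.finrank_range_add_finrank_ker
    rw [Module.finrank_fintype_fun_eq_card] at hrank
    rw [Matrix.rank] at h
    omega
  let b := (Module.finBasisOfFinrankEq F _ hker).reindex (Fintype.equivFin n).symm
  let B : Matrix m n F := Matrix.of fun i k => (b k : m → F) i
  have hB : LinearIndependent F B.col :=
    b.linearIndependent.map' (Submodule.subtype _) (Submodule.ker_subtype _)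
  refine ⟨B, Matrix.mulVec_injective_iff.2 hB, exact_mulVec_iff.2 ⟨?_, ?_⟩⟩
  · ext i k
    exact congrFun (b k).2 i
  · rwa [(linearIndependent_col_iff_rank_eq_card B).1 hB]

lemma exists_det_submatrix_ne_zero [Finite m] [Fintype n] [DecidableEq n] {A : Matrix m n F}
    (h : LinearIndependent F A.col) : ∃ g : n → m, (A.submatrix g id).det ≠ 0 := by
  obtain ⟨f, hf, -, hind⟩ := Submodule.exists_fun_fin_finrank_span_eq F (Set.range A.row)
  choose g hg using hf
  rw [linearIndependent_col_iff_rank_eq_card, Matrix.rank_eq_finrank_span_row] at h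
  let e := Fintype.equivFinOfCardEq h.symm
  refine ⟨g ∘ e, ((Matrix.isUnit_iff_isUnit_det _).1 ?_).ne_zero⟩
  rw [← Matrix.linearIndependent_rows_iff_isUnit]
  have hrow : (A.submatrix (g ∘ e) id).row = f ∘ e := funext fun i => hg (e i)
  rw [hrow]
  exact hind.comp e e.injective

/- Some maximal minor is nonzero after applying `φ`, hence is nonzero in `R` and survives `ψ`. -/
lemma linearIndependent_col_map_of_injective {R K : Type*} [CommRing R] [Field K]
    [Finite m] [Finite n] {φ : R →+* F} {ψ : R →+* K} (hψ : Function.Injective ψ)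
    {A : Matrix m n R} (h : LinearIndependent F (A.map φ).col) :
    LinearIndependent K (A.map ψ).col := by
  cases nonempty_fintype n
  obtain ⟨g, hg⟩ := exists_det_submatrix_ne_zero h
  have hdet : (A.submatrix g id).det ≠ 0 := by
    intro h0
    apply hg
    rw [Matrix.submatrix_map, ← RingHom.mapMatrix_apply, ← RingHom.map_det, h0, map_zero]
  have hdetψ : ((A.map ψ).submatrix g id).det ≠ 0 := by
    rwa [Matrix.submatrix_map, ← RingHom.mapMatrix_apply, ← RingHom.map_det,
      map_ne_zero_iff ψ hψ]
  exact (Matrix.linearIndependent_cols_of_det_ne_zero hdetψ).of_comp (LinearMap.funLeft K K g)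

end LinearAlgebra

section SymmetricMatrices

open scoped Matrix

variable {R ι κ μ : Type*} [CommRing R] [DecidableEq ι]

/-- The symmetric matrix `∑ w_{ij} (E_{ij} + E_{ji})` with a weight for every unordered pair;
in particular its diagonal entries are `2 * w s(i, i)`. -/
def symMatrix : (Sym2 ι → R) →ₗ[R] Matrix ι ι R where
  toFun w := Matrix.of fun i j => if i = j then 2 * w s(i, j) else w s(i, j)
  map_add' w w' := by
    ext i j
    simp only [Matrix.of_apply, Matrix.add_apply, Pi.add_apply]
    split_ifs <;> ring
  map_smul' c w := by
    ext i j
    simp only [Matrix.of_apply, Matrix.smul_apply, Pi.smul_apply, smul_eq_mul, RingHom.id_apply]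
    split_ifs <;> ring

lemma symMatrix_apply (w : Sym2 ι → R) (i j : ι) :
    symMatrix w i j = if i = j then 2 * w s(i, j) else w s(i, j) :=
  rfl

lemma symMatrix_single (a b : ι) :
    symMatrix (Pi.single s(a, b) (1 : R)) = Matrix.single a b 1 + Matrix.single b a 1 := by
  ext i j
  simp only [symMatrix_apply, Matrix.add_apply, Matrix.single_apply, Pi.single_apply, Sym2.eq_iff]
  grind

lemma isSymm_symMatrix (w : Sym2 ι → R) : (symMatrix w).IsSymm := by
  refine Matrix.IsSymm.ext fun i j => ?_
  simp only [symMatrix_apply, Sym2.eq_swap (a := j), eq_comm (a := j)]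

/-- The matrix `J_Sym` of the matroid `𝒮_n(d)`, evaluated at the `n × d` matrix `X`. -/
def symJacobian (X : Matrix ι κ R) : Matrix (ι × κ) (Sym2 ι) R :=
  Matrix.of fun row e =>
    Sym2.lift
      ⟨fun a b => (if a = row.1 then X b row.2 else 0) + (if b = row.1 then X a row.2 else 0),
        fun _ _ => add_comm _ _⟩ e

/-- The matrix whose row `s(i, j)` is the product of the rows `v_i` and `v_j` of `V` in the
symmetric square.  Its columns are indexed by unordered pairs `s(k, l)`, the common value of the
coordinates `(k, l)` and `(l, k)` of a symmetric tensor; squares `v_i ⊗ v_i` are not doubled. -/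
def symSquare (V : Matrix ι μ R) : Matrix (Sym2 ι) (Sym2 μ) R :=
  Matrix.of fun e f =>
    Sym2.lift₂
      ⟨fun a b k l => if a = b then V a k * V a l else V a k * V b l + V b k * V a l,
        fun a b k l => by
          constructor <;> grind⟩ e f

lemma symJacobian_map {T : Type*} [CommRing T] (φ : R →+* T) (X : Matrix ι κ R) :
    symJacobian (X.map φ) = (symJacobian X).map φ := by
  ext row e
  induction e with | _ a b
  simp [symJacobian, apply_ite φ]

lemma symSquare_map {T : Type*} [CommRing T] (φ : R →+* T) (V : Matrix ι μ R) :
    symSquare (V.map φ) = (symSquare V).map φ := by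
  ext e f
  induction e with | _ a b
  induction f with | _ k l
  simp [symSquare, apply_ite φ]

lemma symMatrix_injective [IsDomain R] [NeZero (2 : R)] :
    Function.Injective (symMatrix : (Sym2 ι → R) → Matrix ι ι R) := by
  intro w w' h
  ext e
  induction e with | _ i j
  have hij := congrFun₂ h i j
  simp only [symMatrix_apply] at hij
  split_ifs at hij
  · exact mul_left_cancel₀ two_ne_zero hij
  · exact hij

lemma exists_symMatrix_eq {F : Type*} [Field F] [NeZero (2 : F)] {M : Matrix ι ι F}
    (hM : M.IsSymm) : ∃ w, symMatrix w = M := by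
  refine ⟨Sym2.lift ⟨fun i j => if i = j then M i j / 2 else M i j, fun i j => ?_⟩, ?_⟩
  · simp only [eq_comm (a := i), hM.apply]
  · ext i j
    simp only [symMatrix_apply, Sym2.lift_mk]
    split_ifs
    · exact mul_div_cancel₀ _ two_ne_zero
    · rfl

lemma symJacobian_mulVec_apply [Fintype ι] (X : Matrix ι κ R) (w : Sym2 ι → R) (i : ι) (j : κ) :
    (symJacobian X).mulVec w (i, j) = (symMatrix w * X) i j := by
  suffices h : LinearMap.proj (i, j) ∘ₗ (symJacobian X).mulVecLin =
      Matrix.entryLinearMap R R i j ∘ₗ mulRightLinearMap ι R X ∘ₗ symMatrix from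
    LinearMap.congr_fun h w
  refine LinearMap.pi_ext' fun e => LinearMap.ext_ring ?_
  induction e with | _ a b
  simp [symMatrix_single, symJacobian, Matrix.mul_apply, Matrix.single_apply, add_mul, ite_and,
    Finset.sum_add_distrib]

lemma symMatrix_symSquare_mulVec [Fintype μ] [DecidableEq μ] (V : Matrix ι μ R) (a : Sym2 μ → R) :
    symMatrix ((symSquare V).mulVec a) = V * symMatrix a * Vᵀ := by
  suffices h : symMatrix ∘ₗ (symSquare V).mulVecLin =
      mulRightLinearMap ι R Vᵀ ∘ₗ mulLeftLinearMap μ R V ∘ₗ symMatrix from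
    LinearMap.congr_fun h a
  refine LinearMap.pi_ext' fun f => LinearMap.ext_ring ?_
  induction f with | _ k l
  ext i j
  have hprod (k l : μ) : (V * Matrix.single k l (1 : R) * Vᵀ) i j = V i k * V j l := by
    simp [Matrix.mul_apply, Matrix.single_apply, ite_and]
  simp only [LinearMap.comp_apply, Matrix.mulVecLin_apply, LinearMap.single_apply,
    mulLeftLinearMap_apply, mulRightLinearMap_apply, Matrix.mulVec_single_one, symMatrix_single,
    Matrix.mul_add, Matrix.add_mul, Matrix.add_apply, hprod, symMatrix_apply, Matrix.col_apply,
    symSquare, Matrix.of_apply, Sym2.lift₂_mk]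
  split_ifs with hij
  · rw [hij]
    ring
  · ring

section Exactness

variable {F : Type*} [Field F] [Fintype μ] {X : Matrix ι κ F} {V : Matrix ι μ F}
  [NeZero (2 : F)]

lemma symSquare_mulVec_injective [Finite ι] (hV : Function.Injective V.mulVec) :
    Function.Injective (symSquare V).mulVec := by
  classical
  cases nonempty_fintype ι
  obtain ⟨U, hU⟩ := exists_mul_eq_one_of_mulVec_injective hV
  have hcancel (A : Matrix μ μ F) : U * (V * A * Vᵀ) * Uᵀ = A :=
    calc U * (V * A * Vᵀ) * Uᵀ
        = U * V * A * (U * V)ᵀ := by simp only [Matrix.transpose_mul, Matrix.mul_assoc]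
      _ = A := by rw [hU, Matrix.transpose_one, Matrix.one_mul, Matrix.mul_one]
  intro a b hab
  apply symMatrix_injective
  rw [← hcancel (symMatrix a), ← symMatrix_symSquare_mulVec, hab, symMatrix_symSquare_mulVec,
    hcancel]

variable [Fintype ι]

lemma exact_symSquare_symJacobian (hV : Function.Injective V.mulVec)
    (hVX : Function.Exact V.mulVec Xᵀ.mulVec) :
    Function.Exact (symSquare V).mulVec (symJacobian X).mulVec := by
  classical
  intro w
  have hker : (symJacobian X).mulVec w = 0 ↔ symMatrix w * X = 0 := by
    simp only [funext_iff, Prod.forall, symJacobian_mulVec_apply, ← Matrix.ext_iff]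
    rfl
  rw [hker]
  constructor
  · intro hw
    obtain ⟨A, hA, hVA⟩ := exists_isSymm_mul_mul_transpose_eq hV hVX (isSymm_symMatrix w) hw
    obtain ⟨a, rfl⟩ := exists_symMatrix_eq hA
    exact ⟨a, symMatrix_injective ((symMatrix_symSquare_mulVec V a).trans hVA)⟩
  · rintro ⟨a, rfl⟩
    have hXV : Xᵀ * V = 0 :=
      Matrix.mulVec_injective (funext fun v => by
        rw [← Matrix.mulVec_mulVec, hVX.apply_apply_eq_zero, Matrix.zero_mulVec])
    have hVX0 : Vᵀ * X = 0 := by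
      rw [← Matrix.transpose_eq_zero, Matrix.transpose_mul, Matrix.transpose_transpose, hXV]
    rw [symMatrix_symSquare_mulVec, Matrix.mul_assoc, hVX0, Matrix.mul_zero]

theorem linearIndepOn_symJacobian_iff (hV : Function.Injective V.mulVec)
    (hVX : Function.Exact V.mulVec Xᵀ.mulVec) (S : Set (Sym2 ι)) :
    LinearIndepOn F (symJacobian X).col S ↔ Submodule.span F ((symSquare V).row '' Sᶜ) = ⊤ :=
  linearIndepOn_col_iff_span_row_compl_eq_top (symSquare_mulVec_injective hV)
    (exact_symSquare_symJacobian hV hVX) S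

end Exactness

end SymmetricMatrices

section Generic

open scoped Matrix

variable {ι κ μ k L : Type*} [Field k] [Field L] [Algebra k L]

variable (ι κ k) in
/-- The field `k(x_{ij})` of rational functions in the entries of an `ι × κ` matrix. -/
abbrev GenericField := FractionRing (MvPolynomial (ι × κ) k)

variable (ι κ k) in
/-- The `ι × κ` matrix of independent variables, with entries in `GenericField ι κ k`. -/
def genericMatrix : Matrix ι κ (GenericField ι κ k) :=
  (Matrix.mvPolynomialX ι κ k).map (algebraMap _ _)

variable (k) in
lemma exists_ringHom_map_mvPolynomialX_eq (X : Matrix ι κ L) :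
    ∃ φ : MvPolynomial (ι × κ) k →+* L, (Matrix.mvPolynomialX ι κ k).map φ = X :=
  ⟨MvPolynomial.eval₂Hom (algebraMap k L) fun p => X p.1 p.2, Matrix.mvPolynomialX_map_eval₂ _ X⟩

lemma linearIndependent_col_genericMatrix [Fintype ι] [Fintype κ]
    (h : Fintype.card κ ≤ Fintype.card ι) :
    LinearIndependent (GenericField ι κ k) (genericMatrix ι κ k).col := by
  classical
  obtain ⟨f⟩ := Function.Embedding.nonempty_of_card_le h
  obtain ⟨φ, hφ⟩ := exists_ringHom_map_mvPolynomialX_eq k ((1 : Matrix ι ι k).submatrix id f)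
  refine linearIndependent_col_map_of_injective (φ := φ)
    (IsFractionRing.injective _ _) ?_
  rw [hφ]
  exact (Matrix.linearIndependent_cols_of_isUnit isUnit_one).comp f f.injective

lemma linearIndepOn_col_symJacobian_genericMatrix [Finite ι] [Finite κ] [DecidableEq ι]
    {X : Matrix ι κ L} {S : Set (Sym2 ι)} (h : LinearIndepOn L (symJacobian X).col S) :
    LinearIndepOn (GenericField ι κ k) (symJacobian (genericMatrix ι κ k)).col S := by
  obtain ⟨φ, rfl⟩ := exists_ringHom_map_mvPolynomialX_eq k X
  rw [symJacobian_map] at h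
  rw [genericMatrix, symJacobian_map]
  exact linearIndependent_col_map_of_injective (IsFractionRing.injective _ _)
    (A := (symJacobian (Matrix.mvPolynomialX ι κ k)).submatrix id (Subtype.val : S → Sym2 ι)) h

lemma span_row_symSquare_genericMatrix_eq_top [Finite ι] [Finite μ] [DecidableEq ι]
    {V : Matrix ι μ L} {T : Set (Sym2 ι)}
    (h : Submodule.span L ((symSquare V).row '' T) = ⊤) :
    Submodule.span (GenericField ι μ k) ((symSquare (genericMatrix ι μ k)).row '' T) = ⊤ := by
  obtain ⟨φ, rfl⟩ := exists_ringHom_map_mvPolynomialX_eq k V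
  rw [symSquare_map, span_row_image_eq_top_iff] at h
  rw [genericMatrix, symSquare_map, span_row_image_eq_top_iff]
  exact linearIndependent_col_map_of_injective (IsFractionRing.injective _ _)
    (A := (symSquare (Matrix.mvPolynomialX ι μ k)).submatrix (Subtype.val : T → Sym2 ι) id) h

instance [NeZero (2 : k)] : NeZero (2 : GenericField ι κ k) :=
  NeZero.nat_of_injective (n := 2) (algebraMap k (GenericField ι κ k)).injective

theorem symPower_dual_symCompletion_general [Fintype ι] [Fintype κ] [Fintype μ] [DecidableEq ι]
    [NeZero (2 : k)] (h : Fintype.card κ + Fintype.card μ = Fintype.card ι) (S : Set (Sym2 ι)) :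
    LinearIndepOn (GenericField ι κ k) (symJacobian (genericMatrix ι κ k)).col S ↔
      Submodule.span (GenericField ι μ k) ((symSquare (genericMatrix ι μ k)).row '' Sᶜ) = ⊤ := by
  constructor
  · intro hS
    have hrank : (genericMatrix ι κ k)ᵀ.rank = Fintype.card κ := by
      rw [Matrix.rank_transpose, ← linearIndependent_col_iff_rank_eq_card]
      exact linearIndependent_col_genericMatrix (h ▸ Nat.le_add_right _ _)
    obtain ⟨V, hV, hVX⟩ := exists_injective_exact_mulVec (n := μ) _ (by rw [hrank, h])
    exact span_row_symSquare_genericMatrix_eq_top ((linearIndepOn_symJacobian_iff hV hVX S).1 hS)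
  · intro hS
    have hind := linearIndependent_col_genericMatrix (ι := ι) (κ := μ) (k := k)
      (h ▸ Nat.le_add_left _ _)
    have hrank : (genericMatrix ι μ k)ᵀ.rank = Fintype.card μ := by
      rwa [Matrix.rank_transpose, ← linearIndependent_col_iff_rank_eq_card]
    obtain ⟨X, -, hXV⟩ := exists_injective_exact_mulVec (n := κ) _ (by rw [hrank, add_comm, h])
    rw [← exact_mulVec_transpose_iff, Matrix.transpose_transpose] at hXV
    exact linearIndepOn_col_symJacobian_genericMatrix
      ((linearIndepOn_symJacobian_iff (Matrix.mulVec_injective_iff.2 hind) hXV S).2 hS)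

end Generic

lemma finrank_span_image_symm_eq_choose_iff {E μ F : Type*} [Field F] [Fintype μ]
    (v : E → Sym2 μ → F) (T : Set E) :
    Module.finrank F (Submodule.span F ((fun e (kl : μ × μ) => v e s(kl.1, kl.2)) '' T)) =
        (Fintype.card μ + 1).choose 2 ↔
      Submodule.span F (v '' T) = ⊤ := by
  classical
  let f : (Sym2 μ → F) →ₗ[F] (μ × μ → F) := LinearMap.funLeft F F fun kl => s(kl.1, kl.2)
  have hf : Function.Injective f :=
    LinearMap.funLeft_injective_of_surjective F F _ Sym2.mk_surjective
  have himage : (fun e (kl : μ × μ) => v e s(kl.1, kl.2)) '' T = f '' (v '' T) :=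
    (Set.image_image f v T).symm
  rw [himage, ← Submodule.map_span, (Submodule.equivMapOfInjective f hf _).symm.finrank_eq,
    ← Sym2.card, ← Module.finrank_fintype_fun_eq_card F]
  exact ⟨Submodule.eq_top_of_finrank_eq, fun h => (LinearEquiv.ofTop _ h).finrank_eq⟩

lemma finrank_span_pVec_eq_choose_iff (n c : ℕ) (T : Set (Sym2 (Fin n))) :
    Module.finrank (SymK' n c) (Submodule.span (SymK' n c) (pVec n c '' T)) = (c + 1).choose 2 ↔
      Submodule.span (SymK' n c) ((symSquare (genericMatrix (Fin n) (Fin c) ℚ)).row '' T) = ⊤ := by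
  have hpVec : pVec n c =
      fun e kl => (symSquare (genericMatrix (Fin n) (Fin c) ℚ)).row e s(kl.1, kl.2) := by
    ext e kl
    induction e
    rfl
  rw [hpVec, ← finrank_span_image_symm_eq_choose_iff, Fintype.card_fin]

/-- The symmetric power matroid `S_n(n−d, 0)` is the dual of the symmetric matrix
completion matroid `𝒮_n(d)`:  a set `S` of columns of `J_Sym` is linearly independent
iff the span of the vectors `p_e` for `e ∉ S` has dimension `(n−d+1).choose 2`. -/
theorem symPower_dual_symCompletion (n d : ℕ) (hn : 1 ≤ n) (hd : d ≤ n)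
    (S : Set (Sym2 (Fin n))) :
    LinearIndependent (SymK n d) (fun e : S => colJSym n d e) ↔
      Module.finrank (SymK' n (n - d))
          (Submodule.span (SymK' n (n - d)) (pVec n (n - d) '' Sᶜ)) =
        Nat.choose (n - d + 1) 2 := by
  rw [finrank_span_pVec_eq_choose_iff]
  exact symPower_dual_symCompletion_general (by simp only [Fintype.card_fin]; omega) S
end
end

section
/- Let n ≥ 1 and 0 ≤ d ≤ n, and let E = {2-element subsets of [n]} be the common ground set. For every subset S ⊆ E, the columns of the matrix H indexed by S are linearly independent (i.e., S is independent in the hyperconnectivity matroid H_n(d)) if and only if the span over K' of the vectors {q_{{i,j}} : {i,j} ∈ E ∖ S} has dimension binom(n−d, 2) (i.e., E ∖ S is spanning in the wedge power matroid W_n(n−d, 0)). In matroid language: the wedge power matroid W_n(n−d, 0) is the dual of the hyperconnectivity matroid H_n(d). -/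
open scoped Classical

noncomputable section

/-- The ground set: 2-element subsets of `[n]`, encoded as ordered pairs `(i,j)` with
`i < j`. -/
abbrev Pairs (n : ℕ) := {p : Fin n × Fin n // p.1 < p.2}

/-- The rational function field `ℚ(x_{ij} : i ∈ [n], j ∈ [d])`. -/
abbrev HK (n d : ℕ) := FractionRing (MvPolynomial (Fin n × Fin d) ℚ)

noncomputable def Xh (n d : ℕ) (i : Fin n) (j : Fin d) : HK n d :=
  algebraMap (MvPolynomial (Fin n × Fin d) ℚ) (HK n d) (MvPolynomial.X (i, j))

/-- The column of the hyperconnectivity matrix `H` labeled by the pair `{k,ℓ}` with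
`k < ℓ`: the row labeled `(i,j)` has entry `x_{kj}` when `ℓ = i`, entry `−x_{ℓj}` when
`k = i`, and `0` otherwise. -/
noncomputable def colH (n d : ℕ) (e : Pairs n) : Fin n × Fin d → HK n d := fun row =>
  if e.1.2 = row.1 then Xh n d e.1.1 row.2
  else if e.1.1 = row.1 then - Xh n d e.1.2 row.2
  else 0

/-- The field `K'`: fractions of the polynomial ring over `ℚ` in the variables
`v_{ik}` (`i ∈ [n]`, `k ∈ [n-d]`). -/
abbrev HK' (n c : ℕ) := FractionRing (MvPolynomial (Fin n × Fin c) ℚ)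

noncomputable def vh (n c : ℕ) (i : Fin n) (k : Fin c) : HK' n c :=
  algebraMap (MvPolynomial (Fin n × Fin c) ℚ) (HK' n c) (MvPolynomial.X (i, k))

/-- The vector `q_{{i,j}} ∈ K'^{[n-d]×[n-d]}` (for `i < j`) with `(k,l)`-entry
`v_{ik}v_{jl} − v_{jk}v_{il}`, realizing `v_i ∧ v_j`. -/
noncomputable def qVec (n c : ℕ) (e : Pairs n) : Fin c × Fin c → HK' n c := fun kl =>
  vh n c e.1.1 kl.1 * vh n c e.1.2 kl.2 - vh n c e.1.2 kl.1 * vh n c e.1.1 kl.2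

/-!
For matrices `X` and `V` over one field whose column spaces are orthogonal complements, a linear
dependency among the columns of `H` is an alternating matrix `Λ` with `Xᵀ * Λ = 0`, and these are
exactly the matrices `V * M * Vᵀ` with `M` alternating. The entries of `V * M * Vᵀ` are the values
of one linear functional at the vectors `q_e`, so `H` and `q` are Gale dual: a set of columns of
`H` is independent iff the `q_e` outside it span `⋀²`.

The generic `X` and the generic `V` live in different fields. Starting from either one, choose an
orthogonal complement of it over its own field; the complement is a specialization of the other
generic matrix. A minor which is nonzero at a specialization is nonzero generically, and this is
used once in each direction.
-/

open scoped Matrix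

section LinearAlgebra

/-- Both sides say that no nonzero kernel element of `linearCombination` is supported on `S`. -/
theorem linearIndepOn_iff_linearIndependent_compl_restrict {R M E I : Type*} [Ring R]
    [AddCommGroup M] [Module R M] [Fintype E] {b : E → M} {a : I → E → R}
    (ha : LinearIndependent R a)
    (hab : Submodule.span R (Set.range a) = (Fintype.linearCombination R b).ker) (S : Set E) :
    LinearIndepOn R b S ↔ LinearIndependent R fun i => Sᶜ.domRestrict (a i) := by
  let res : (E → R) →ₗ[R] (↥Sᶜ → R) := LinearMap.funLeft R R Subtype.val
  have h_row : LinearIndependent R (res ∘ a) ↔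
      Disjoint (Submodule.span R (Set.range a)) res.ker :=
    ⟨Submodule.range_ker_disjoint, fun h => (res.linearIndependent_iff_of_disjoint h).2 ha⟩
  have h_ker (l : E →₀ R) : ⇑l ∈ res.ker ↔ l ∈ Finsupp.supported R R S := by
    simp [res, Finsupp.mem_supported', funext_iff, LinearMap.funLeft_apply]
  change _ ↔ LinearIndependent R (res ∘ a)
  rw [h_row, hab, disjoint_comm, linearIndepOn_iff_disjoint, Submodule.disjoint_def,
    Submodule.disjoint_def, Finsupp.equivFunOnFinite.forall_congr_left]
  simp [← h_ker, Fintype.linearCombination_apply, Finsupp.linearCombination_apply,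
    Finsupp.sum_fintype, DFunLike.ext_iff, funext_iff]

variable {K I J : Type*} [Field K]

theorem exists_isUnit_submatrix_of_linearIndependent_row [Fintype I] [DecidableEq I] [Finite J]
    {A : Matrix I J K} (hA : LinearIndependent K A.row) :
    ∃ s : I → J, IsUnit (A.submatrix id s) := by
  have := Fintype.ofFinite J
  have h_span : Submodule.span K (Set.range A.col) = ⊤ := by
    apply Submodule.eq_top_of_finrank_eq
    rw [← A.rank_eq_finrank_span_cols, hA.rank_matrix, Module.finrank_fintype_fun_eq_card]
  obtain ⟨κ, s, hs, hs_span, hs_indep⟩ := exists_linearIndependent' K A.col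
  have := Fintype.ofInjective s hs
  let basis := Module.Basis.mk hs_indep (hs_span.trans h_span).ge
  have h_card : Fintype.card I = Fintype.card κ := by
    rw [← Module.finrank_eq_card_basis basis, Module.finrank_fintype_fun_eq_card]
  let e : I ≃ κ := Fintype.equivOfCardEq h_card
  exact ⟨s ∘ e, Matrix.linearIndependent_cols_iff_isUnit.1 (hs_indep.comp e e.injective)⟩

theorem linearIndependent_row_of_isUnit_submatrix [Fintype I] [DecidableEq I]
    {A : Matrix I J K} {s : I → J} (h : IsUnit (A.submatrix id s)) : LinearIndependent K A.row :=
  .of_comp (LinearMap.funLeft K K s) (Matrix.linearIndependent_rows_iff_isUnit.2 h)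

theorem linearIndependent_row_map_of_injective {R L : Type*} [CommRing R] [Field L] [Finite I]
    [Finite J] {φ : R →+* L} {ψ : R →+* K} (hψ : Function.Injective ψ) {A : Matrix I J R}
    (hA : LinearIndependent L (A.map φ).row) : LinearIndependent K (A.map ψ).row := by
  have := Fintype.ofFinite I
  obtain ⟨s, hs⟩ := exists_isUnit_submatrix_of_linearIndependent_row hA
  refine linearIndependent_row_of_isUnit_submatrix (s := s) ?_
  rw [Matrix.submatrix_map, ← RingHom.mapMatrix_apply, Matrix.isUnit_iff_isUnit_det,
    ← RingHom.map_det, isUnit_iff_ne_zero] at hs ⊢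
  exact (map_ne_zero_iff ψ hψ).2 (ne_zero_of_map hs)

theorem exists_mul_eq_one_of_linearIndependent_col [Finite I] [DecidableEq I] [Fintype J]
    {V : Matrix J I K} (hV : LinearIndependent K V.col) :
    ∃ W : Matrix I J K, W * V = 1 := by
  have := Fintype.ofFinite I
  obtain ⟨g, hg⟩ := V.mulVecLin.exists_leftInverse_of_injective
    (LinearMap.ker_eq_bot.2 (Matrix.mulVec_injective_iff.2 hV))
  refine ⟨LinearMap.toMatrix' g, ?_⟩
  rw [← LinearMap.toMatrix'_toLin' V, ← LinearMap.toMatrix'_comp, Matrix.toLin'_apply', hg,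
    LinearMap.toMatrix'_id]

theorem mul_eq_zero_iff_of_exact {R l m n p : Type*} [Semiring R] [Fintype m] [Fintype n]
    {A : Matrix l m R} {B : Matrix m n R} (h : Function.Exact B.mulVec A.mulVec)
    (Y : Matrix m p R) : A * Y = 0 ↔ ∃ Z : Matrix n p R, B * Z = Y := by
  constructor
  · intro hY
    have h_col (j : p) : ∃ z, B *ᵥ z = Y.col j := (h _).1 (congrArg (Matrix.col · j) hY)
    choose z hz using h_col
    exact ⟨(Matrix.of z)ᵀ, by ext i j; exact congrFun (hz j) i⟩
  · rintro ⟨Z, rfl⟩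
    ext i j
    exact congrFun ((h _).2 ⟨Z.col j, rfl⟩) i

section Orthogonal

variable {ι κ μ : Type*} [Fintype ι] [Fintype κ] [Fintype μ]

theorem finrank_ker_transpose_mulVecLin {X : Matrix ι κ K} (hX : LinearIndependent K X.col)
    (h_card : Fintype.card κ + Fintype.card μ = Fintype.card ι) :
    Module.finrank K Xᵀ.mulVecLin.ker = Fintype.card μ := by
  have h_rank : Xᵀ.rank = Fintype.card κ := LinearIndependent.rank_matrix hX
  have h_nullity := Xᵀ.mulVecLin.finrank_range_add_finrank_ker
  rw [Module.finrank_fintype_fun_eq_card, ← Matrix.rank, h_rank] at h_nullity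
  lia

theorem exists_linearIndependent_col_transpose_mul_eq_zero {X : Matrix ι κ K}
    (hX : LinearIndependent K X.col)
    (h_card : Fintype.card κ + Fintype.card μ = Fintype.card ι) :
    ∃ V : Matrix ι μ K, LinearIndependent K V.col ∧ Xᵀ * V = 0 := by
  let basis := (Module.finBasisOfFinrankEq K _
    (finrank_ker_transpose_mulVecLin hX h_card)).reindex (Fintype.equivFin μ).symm
  refine ⟨(Matrix.of fun k => (basis k : ι → K))ᵀ, ?_, ?_⟩
  · exact basis.linearIndependent.map' (Submodule.subtype _) (Submodule.ker_subtype _)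
  · ext j k
    exact congrFun (basis k).2 j

theorem exact_mulVec_of_linearIndependent_col {X : Matrix ι κ K} {V : Matrix ι μ K}
    (hX : LinearIndependent K X.col) (hV : LinearIndependent K V.col) (hXV : Xᵀ * V = 0)
    (h_card : Fintype.card κ + Fintype.card μ = Fintype.card ι) :
    Function.Exact V.mulVec Xᵀ.mulVec := by
  have h_range : V.mulVecLin.range = Xᵀ.mulVecLin.ker := by
    apply Submodule.eq_of_le_of_finrank_eq
    · rintro _ ⟨w, rfl⟩
      simp only [LinearMap.mem_ker, Matrix.mulVecLin_apply, Matrix.mulVec_mulVec, hXV,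
        Matrix.zero_mulVec]
    · rw [finrank_ker_transpose_mulVecLin hX h_card,
        LinearMap.finrank_range_of_inj (Matrix.mulVec_injective_iff.2 hV),
        Module.finrank_fintype_fun_eq_card]
  exact LinearMap.exact_iff.2 h_range.symm

end Orthogonal

end LinearAlgebra

section Alternating

variable {R : Type*} [CommRing R] {n c : ℕ}

/-- The alternating matrix with prescribed entries above the diagonal, i.e. the isomorphism from
coordinates in the basis `e_k ∧ e_ℓ` of `⋀² Rⁿ` to alternating matrices. -/
def altMatrix : (Pairs n → R) →ₗ[R] Matrix (Fin n) (Fin n) R :=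
  Fintype.linearCombination R fun e =>
    Matrix.single e.1.1 e.1.2 1 - Matrix.single e.1.2 e.1.1 1

theorem altMatrix_apply_pair (l : Pairs n → R) (e : Pairs n) : altMatrix l e.1.1 e.1.2 = l e := by
  obtain ⟨⟨i, j⟩, hij⟩ := e
  rw [altMatrix, Fintype.linearCombination_apply, Matrix.sum_apply,
    Fintype.sum_eq_single ⟨(i, j), hij⟩]
  · simp [hij.ne]
  · rintro ⟨⟨k, m⟩, hkm⟩ hne
    have h₁ : ¬(k = i ∧ m = j) := by grind
    have h₂ : ¬(m = i ∧ k = j) := by grind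
    simp [h₁, h₂]

theorem altMatrix_apply_self (l : Pairs n → R) (i : Fin n) : altMatrix l i i = 0 := by
  have h (e : Pairs n) : ¬(e.1.1 = i ∧ e.1.2 = i) := fun h => e.2.ne (h.1.trans h.2.symm)
  simp [altMatrix, Fintype.linearCombination_apply, Matrix.sum_apply, h,
    and_comm]

theorem altMatrix_transpose (l : Pairs n → R) : (altMatrix l)ᵀ = -altMatrix l := by
  simp [altMatrix, Fintype.linearCombination_apply, Matrix.transpose_sum,
    ← Finset.sum_neg_distrib, ← smul_neg]

theorem altMatrix_injective :
    Function.Injective (altMatrix : (Pairs n → R) → Matrix (Fin n) (Fin n) R) := by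
  intro l m h
  ext e
  rw [← altMatrix_apply_pair l, h, altMatrix_apply_pair]

theorem altMatrix_entries_sub_transpose (U : Matrix (Fin n) (Fin n) R) :
    altMatrix (fun e => (U - Uᵀ) e.1.1 e.1.2) = U - Uᵀ := by
  ext i j
  rcases lt_trichotomy i j with h | rfl | h
  · exact altMatrix_apply_pair _ ⟨(i, j), h⟩
  · simp [altMatrix_apply_self]
  · rw [← Matrix.transpose_apply (altMatrix _), altMatrix_transpose, Matrix.neg_apply,
      altMatrix_apply_pair _ ⟨(j, i), h⟩]
    simp

theorem altMatrix_congruence (A : Matrix (Fin c) (Fin n) R) (l : Pairs n → R) :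
    altMatrix (fun e => (A * altMatrix l * Aᵀ) e.1.1 e.1.2) = A * altMatrix l * Aᵀ := by
  obtain ⟨U, hU⟩ : ∃ U : Matrix (Fin n) (Fin n) R, altMatrix l = U - Uᵀ :=
    ⟨Fintype.linearCombination R (fun e => Matrix.single e.1.1 e.1.2 1) l, by
      simp [altMatrix, Fintype.linearCombination_apply, smul_sub, Matrix.transpose_sum]⟩
  have h : A * altMatrix l * Aᵀ = A * U * Aᵀ - (A * U * Aᵀ)ᵀ := by
    simp [hU, Matrix.mul_sub, Matrix.sub_mul, Matrix.mul_assoc]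
  rw [h, altMatrix_entries_sub_transpose]

theorem transpose_mul_altMatrix_eq_zero_iff {κ : Type*} {X : Matrix (Fin n) κ R}
    {V : Matrix (Fin n) (Fin c) R} {W : Matrix (Fin c) (Fin n) R} (hWV : W * V = 1)
    (hXV : Function.Exact V.mulVec Xᵀ.mulVec) (l : Pairs n → R) :
    Xᵀ * altMatrix l = 0 ↔ ∃ m : Pairs c → R, V * altMatrix m * Vᵀ = altMatrix l := by
  rw [mul_eq_zero_iff_of_exact hXV]
  constructor
  · rintro ⟨Z, hZ⟩
    have h_left : V * (W * altMatrix l) = altMatrix l := by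
      rw [← hZ, ← Matrix.mul_assoc W, hWV, Matrix.one_mul]
    have h_right : altMatrix l * (Wᵀ * Vᵀ) = altMatrix l := by
      simpa [altMatrix_transpose, Matrix.mul_assoc] using congrArg Matrix.transpose h_left
    refine ⟨fun e => (W * altMatrix l * Wᵀ) e.1.1 e.1.2, ?_⟩
    rw [altMatrix_congruence]
    calc V * (W * altMatrix l * Wᵀ) * Vᵀ
        = V * (W * altMatrix l) * (Wᵀ * Vᵀ) := by simp only [Matrix.mul_assoc]
      _ = altMatrix l := by rw [h_left, h_right]
  · rintro ⟨m, hm⟩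
    exact ⟨altMatrix m * Vᵀ, by rw [← hm, Matrix.mul_assoc]⟩

end Alternating

section Duality

variable {R κ μ : Type*} [CommRing R] {n c : ℕ}

/-- The column labeled `e` of the hyperconnectivity matrix with coefficient matrix `X`; `colH` is
the case of independent variables. Isolating `X` allows specializing the variables. -/
def hyperconnectivityCol (X : Matrix (Fin n) κ R) (e : Pairs n) : Fin n × κ → R := fun row =>
  if e.1.2 = row.1 then X e.1.1 row.2
  else if e.1.1 = row.1 then -X e.1.2 row.2
  else 0

/-- The wedge of the two rows of `V` labeled by `e`, encoded as the alternating tensor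
`v ⊗ w - w ⊗ v`; `qVec` is the case of independent variables. -/
def wedgeVec (V : Matrix (Fin n) μ R) (e : Pairs n) : μ × μ → R := fun kl =>
  V e.1.1 kl.1 * V e.1.2 kl.2 - V e.1.2 kl.1 * V e.1.1 kl.2

/-- The row labeled `f` of the second compound matrix (the `2 × 2` minors) of `V`, transposed: the
coordinates at `f` of all vectors `wedgeVec V e`. Only the positions `k < l` are kept, so that
distinct rows can be independent. -/
def wedgeRow (V : Matrix (Fin n) (Fin c) R) (f : Pairs c) (e : Pairs n) : R := wedgeVec V e f.1

theorem linearCombination_hyperconnectivityCol (X : Matrix (Fin n) κ R) (l : Pairs n → R)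
    (i : Fin n) (j : κ) :
    Fintype.linearCombination R (hyperconnectivityCol X) l (i, j) = (Xᵀ * altMatrix l) j i := by
  simp only [altMatrix, Fintype.linearCombination_apply, Matrix.mul_sum, Finset.sum_apply,
    Matrix.sum_apply, Pi.smul_apply, Matrix.mul_smul, Matrix.smul_apply, Matrix.mul_sub,
    Matrix.sub_apply]
  refine Finset.sum_congr rfl fun e _ => ?_
  by_cases h₁ : e.1.1 = i
  · subst h₁
    simp [hyperconnectivityCol, e.2.ne, e.2.ne']
  · by_cases h₂ : e.1.2 = i
    · subst h₂
      simp [hyperconnectivityCol, e.2.ne']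
    · simp [hyperconnectivityCol, h₁, h₂, Ne.symm h₁, Ne.symm h₂]

theorem altMatrix_linearCombination_wedgeRow (V : Matrix (Fin n) (Fin c) R) (m : Pairs c → R) :
    altMatrix (Fintype.linearCombination R (wedgeRow V) m) = V * altMatrix m * Vᵀ := by
  rw [← altMatrix_congruence]
  congr 1
  ext e
  simp [altMatrix, Fintype.linearCombination_apply, Matrix.mul_sum, Matrix.sum_mul,
    Matrix.sum_apply, wedgeRow, wedgeVec, Matrix.mul_sub, Matrix.sub_mul,
    Matrix.single_eq_single_vecMulVec_single, Matrix.mul_vecMulVec, Matrix.vecMulVec_mul,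
    Matrix.vecMulVec_apply, Matrix.vecMul_transpose,
    mul_comm (V e.1.2 _)]

theorem linearIndependent_wedgeRow {V : Matrix (Fin n) (Fin c) R} {W : Matrix (Fin c) (Fin n) R}
    (hWV : W * V = 1) : LinearIndependent R (wedgeRow V) := by
  rw [linearIndependent_iff_injective_fintypeLinearCombination, injective_iff_map_eq_zero]
  intro m hm
  have hVW : Vᵀ * Wᵀ = 1 := by rw [← Matrix.transpose_mul, hWV, Matrix.transpose_one]
  apply altMatrix_injective
  calc altMatrix m = W * V * altMatrix m * (Vᵀ * Wᵀ) := by simp [hWV, hVW]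
    _ = W * (V * altMatrix m * Vᵀ) * Wᵀ := by simp only [Matrix.mul_assoc]
    _ = altMatrix 0 := by simp [← altMatrix_linearCombination_wedgeRow, hm]

theorem span_wedgeRow_eq_ker_hyperconnectivityCol {X : Matrix (Fin n) κ R}
    {V : Matrix (Fin n) (Fin c) R} {W : Matrix (Fin c) (Fin n) R} (hWV : W * V = 1)
    (hXV : Function.Exact V.mulVec Xᵀ.mulVec) :
    Submodule.span R (Set.range (wedgeRow V)) =
      (Fintype.linearCombination R (hyperconnectivityCol X)).ker := by
  ext l
  have h_ker : Fintype.linearCombination R (hyperconnectivityCol X) l = 0 ↔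
      Xᵀ * altMatrix l = 0 := by
    simp only [funext_iff, Prod.forall, linearCombination_hyperconnectivityCol, ← Matrix.ext_iff]
    exact forall_comm
  rw [← Fintype.range_linearCombination, LinearMap.mem_ker, h_ker,
    transpose_mul_altMatrix_eq_zero_iff hWV hXV, LinearMap.mem_range]
  simp only [← altMatrix_linearCombination_wedgeRow, altMatrix_injective.eq_iff]

theorem linearIndepOn_hyperconnectivityCol_iff {K : Type*} [Field K] {X : Matrix (Fin n) κ K}
    {V : Matrix (Fin n) (Fin c) K} (hV : LinearIndependent K V.col)
    (hXV : Function.Exact V.mulVec Xᵀ.mulVec) (S : Set (Pairs n)) :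
    LinearIndepOn K (hyperconnectivityCol X) S ↔
      LinearIndependent K fun f => Sᶜ.domRestrict (wedgeRow V f) := by
  obtain ⟨W, hWV⟩ := exists_mul_eq_one_of_linearIndependent_col hV
  exact linearIndepOn_iff_linearIndependent_compl_restrict (linearIndependent_wedgeRow hWV)
    (span_wedgeRow_eq_ker_hyperconnectivityCol hWV hXV) S

theorem card_pairs (n : ℕ) : Fintype.card (Pairs n) = n.choose 2 := by
  let below : Pairs n ≃ Σ j : Fin n, Fin j :=
    { toFun := fun e => ⟨e.1.2, ⟨e.1.1, e.2⟩⟩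
      invFun := fun x => ⟨(x.2.castLE x.1.2.le, x.1), x.2.2⟩
      left_inv := fun _ => rfl
      right_inv := fun _ => rfl }
  rw [Fintype.card_congr below, Fintype.card_sigma]
  simp [Fin.sum_univ_eq_sum_range (fun i => i) n, Finset.sum_range_id, Nat.choose_two_right]

theorem altMatrix_wedgeRow (V : Matrix (Fin n) (Fin c) R) (e : Pairs n) (k l : Fin c) :
    altMatrix (fun f => wedgeRow V f e) k l = wedgeVec V e (k, l) := by
  have h := altMatrix_entries_sub_transpose (Matrix.vecMulVec (V e.1.1) (V e.1.2))
  convert congrFun₂ h k l using 3 <;> simp [wedgeRow, wedgeVec, Matrix.vecMulVec_apply, mul_comm]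

theorem finrank_span_wedgeVec_eq_choose_two_iff {K : Type*} [Field K]
    (V : Matrix (Fin n) (Fin c) K) (T : Set (Pairs n)) :
    Module.finrank K (Submodule.span K (wedgeVec V '' T)) = c.choose 2 ↔
      LinearIndependent K fun f => T.domRestrict (wedgeRow V f) := by
  let A : Matrix (Pairs c) T K := Matrix.of fun f => T.domRestrict (wedgeRow V f)
  let entries : Matrix (Fin c) (Fin c) K ≃ₗ[K] (Fin c × Fin c → K) :=
    (LinearEquiv.curry K K (Fin c) (Fin c)).symm
  let embed : (Pairs c → K) →ₗ[K] (Fin c × Fin c → K) := entries.toLinearMap ∘ₗ altMatrix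
  have h_embed : Function.Injective embed := entries.injective.comp altMatrix_injective
  have h_image : wedgeVec V '' T = embed '' Set.range A.col := by
    rw [← Set.range_comp, Set.image_eq_range]
    congr 1
    ext e kl
    exact (altMatrix_wedgeRow V e kl.1 kl.2).symm
  rw [h_image, ← Submodule.map_span, ← (Submodule.equivMapOfInjective embed h_embed _).finrank_eq,
    ← A.rank_eq_finrank_span_cols, A.rank_eq_finrank_span_row, ← card_pairs, eq_comm]
  exact linearIndependent_iff_card_eq_finrank_span.symm

end Duality

section Specialization

theorem mvPolynomialX_map_aeval {R A ι κ : Type*} [CommSemiring R] [CommSemiring A] [Algebra R A]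
    (X : Matrix ι κ A) :
    (Matrix.mvPolynomialX ι κ R).map (MvPolynomial.aeval fun p => X p.1 p.2) = X :=
  Matrix.mvPolynomialX_map_eval₂ (algebraMap R A) X

variable {R A G κ : Type*} [CommRing R] [CommRing A] {n c : ℕ}

theorem hyperconnectivityCol_map [FunLike G R A] [RingHomClass G R A] (f : G)
    (X : Matrix (Fin n) κ R) (e : Pairs n) :
    hyperconnectivityCol (X.map f) e = f ∘ hyperconnectivityCol X e := by
  ext row
  simp [hyperconnectivityCol, apply_ite f]

theorem wedgeRow_map [FunLike G R A] [RingHomClass G R A] (f : G)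
    (V : Matrix (Fin n) (Fin c) R) (g : Pairs c) : wedgeRow (V.map f) g = f ∘ wedgeRow V g := by
  ext e
  simp [wedgeRow, wedgeVec]

variable [Algebra R A]

theorem hyperconnectivityCol_mvPolynomialX_map_aeval (X : Matrix (Fin n) κ A)
    (S : Set (Pairs n)) :
    (Matrix.of fun e : S => hyperconnectivityCol (Matrix.mvPolynomialX (Fin n) κ R) e).map
        (MvPolynomial.aeval fun p => X p.1 p.2) =
      Matrix.of fun e : S => hyperconnectivityCol X e := by
  ext e row
  have h := hyperconnectivityCol_map (MvPolynomial.aeval fun p : Fin n × κ => X p.1 p.2)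
    (Matrix.mvPolynomialX (Fin n) κ R) e
  rw [mvPolynomialX_map_aeval] at h
  exact (congrFun h row).symm

theorem wedgeRow_mvPolynomialX_map_aeval (V : Matrix (Fin n) (Fin c) A) (T : Set (Pairs n)) :
    (Matrix.of fun f => T.domRestrict (wedgeRow (Matrix.mvPolynomialX (Fin n) (Fin c) R) f)).map
        (MvPolynomial.aeval fun p => V p.1 p.2) =
      Matrix.of fun f => T.domRestrict (wedgeRow V f) := by
  ext f e
  have h := wedgeRow_map (MvPolynomial.aeval fun p : Fin n × Fin c => V p.1 p.2)
    (Matrix.mvPolynomialX (Fin n) (Fin c) R) f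
  rw [mvPolynomialX_map_aeval] at h
  exact (congrFun h e.1).symm

end Specialization

section Generic

variable {F K L : Type*} [CommRing F] [Field K] [Algebra F K] [Field L] [Algebra F L] {n c : ℕ}

theorem linearIndependent_row_map_aeval {σ I J : Type*} [Finite I] [Finite J] {x : σ → K}
    (hx : AlgebraicIndependent F x) (y : σ → L) {A : Matrix I J (MvPolynomial σ F)}
    (hA : LinearIndependent L (A.map (MvPolynomial.aeval y)).row) :
    LinearIndependent K (A.map (MvPolynomial.aeval x)).row :=
  linearIndependent_row_map_of_injective (φ := (MvPolynomial.aeval y : _ →ₐ[F] L).toRingHom)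
    (ψ := (MvPolynomial.aeval x : _ →ₐ[F] K).toRingHom) hx hA

theorem linearIndependent_col_of_algebraicIndependent {ι κ : Type*} [Fintype ι] [Fintype κ]
    {X : Matrix ι κ K} (hX : AlgebraicIndependent F fun p : ι × κ => X p.1 p.2)
    (h_card : Fintype.card κ ≤ Fintype.card ι) : LinearIndependent K X.col := by
  obtain ⟨f⟩ := Function.Embedding.nonempty_of_card_le h_card
  let Y : Matrix κ ι K := Matrix.of fun j => Pi.single (f j) 1
  have hY : LinearIndependent K Y.row := (Pi.linearIndependent_single_one ι K).comp f f.injective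
  have h_specialize := linearIndependent_row_map_aeval hX (fun p => Yᵀ p.1 p.2)
    (A := (Matrix.mvPolynomialX ι κ F)ᵀ)
  rw [Matrix.transpose_map, Matrix.transpose_map, mvPolynomialX_map_aeval,
    mvPolynomialX_map_aeval] at h_specialize
  exact h_specialize hY

theorem linearIndepOn_hyperconnectivityCol_of_algebraicIndependent {κ : Type*} [Finite κ]
    {X : Matrix (Fin n) κ K} (hX : AlgebraicIndependent F fun p : Fin n × κ => X p.1 p.2)
    {Y : Matrix (Fin n) κ L} {S : Set (Pairs n)} (hY : LinearIndepOn L (hyperconnectivityCol Y) S) :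
    LinearIndepOn K (hyperconnectivityCol X) S := by
  have h_specialize := linearIndependent_row_map_aeval hX (fun p => Y p.1 p.2)
    (A := Matrix.of fun e : S => hyperconnectivityCol (Matrix.mvPolynomialX (Fin n) κ F) e)
  rw [hyperconnectivityCol_mvPolynomialX_map_aeval,
    hyperconnectivityCol_mvPolynomialX_map_aeval] at h_specialize
  exact h_specialize hY

theorem linearIndependent_wedgeRow_of_algebraicIndependent {V : Matrix (Fin n) (Fin c) K}
    (hV : AlgebraicIndependent F fun p : Fin n × Fin c => V p.1 p.2)
    {W : Matrix (Fin n) (Fin c) L} {T : Set (Pairs n)}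
    (hW : LinearIndependent L fun f => T.domRestrict (wedgeRow W f)) :
    LinearIndependent K fun f => T.domRestrict (wedgeRow V f) := by
  have h_specialize := linearIndependent_row_map_aeval hV (fun p => W p.1 p.2)
    (A := Matrix.of fun f => T.domRestrict (wedgeRow (Matrix.mvPolynomialX (Fin n) (Fin c) F) f))
  rw [wedgeRow_mvPolynomialX_map_aeval, wedgeRow_mvPolynomialX_map_aeval] at h_specialize
  exact h_specialize hW

theorem algebraicIndependent_algebraMap_X (σ F A : Type*) [CommRing F] [CommRing A] [Algebra F A]
    [Algebra (MvPolynomial σ F) A] [IsScalarTower F (MvPolynomial σ F) A]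
    [FaithfulSMul (MvPolynomial σ F) A] :
    AlgebraicIndependent F fun s : σ => algebraMap (MvPolynomial σ F) A (MvPolynomial.X s) :=
  (MvPolynomial.algebraicIndependent_X σ F).map'
    (f := IsScalarTower.toAlgHom F (MvPolynomial σ F) A) (FaithfulSMul.algebraMap_injective _ _)

theorem wedgePower_dual_hyperconnectivity_general {d : ℕ} (hdc : d + c = n)
    {X : Matrix (Fin n) (Fin d) K} (hX : AlgebraicIndependent F fun p : Fin n × Fin d => X p.1 p.2)
    {V : Matrix (Fin n) (Fin c) L} (hV : AlgebraicIndependent F fun p : Fin n × Fin c => V p.1 p.2)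
    (S : Set (Pairs n)) :
    LinearIndepOn K (hyperconnectivityCol X) S ↔
      Module.finrank L (Submodule.span L (wedgeVec V '' Sᶜ)) = c.choose 2 := by
  have hX_col : LinearIndependent K X.col :=
    linearIndependent_col_of_algebraicIndependent hX (by simp only [Fintype.card_fin]; lia)
  have hV_col : LinearIndependent L V.col :=
    linearIndependent_col_of_algebraicIndependent hV (by simp only [Fintype.card_fin]; lia)
  have h_card : Fintype.card (Fin d) + Fintype.card (Fin c) = Fintype.card (Fin n) := by
    simpa only [Fintype.card_fin]
  rw [finrank_span_wedgeVec_eq_choose_two_iff]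
  constructor
  · intro hS
    obtain ⟨V₀, hV₀_col, hXV₀⟩ := exists_linearIndependent_col_transpose_mul_eq_zero hX_col h_card
    have h_exact := exact_mulVec_of_linearIndependent_col hX_col hV₀_col hXV₀ h_card
    exact linearIndependent_wedgeRow_of_algebraicIndependent hV
      ((linearIndepOn_hyperconnectivityCol_iff hV₀_col h_exact S).1 hS)
  · intro hS
    obtain ⟨X₀, hX₀_col, hVX₀⟩ := exists_linearIndependent_col_transpose_mul_eq_zero hV_col
      ((add_comm _ _).trans h_card)
    have hX₀V : X₀ᵀ * V = 0 := by simpa using congrArg Matrix.transpose hVX₀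
    have h_exact := exact_mulVec_of_linearIndependent_col hX₀_col hV_col hX₀V h_card
    exact linearIndepOn_hyperconnectivityCol_of_algebraicIndependent hX
      ((linearIndepOn_hyperconnectivityCol_iff hV_col h_exact S).2 hS)

end Generic

/-- The wedge power matroid `W_n(n−d, 0)` is the dual of the hyperconnectivity matroid
`H_n(d)`: a set `S` of columns of `H` is linearly independent iff the span of the
vectors `q_e` for `e ∉ S` has dimension `(n−d).choose 2`. -/
theorem wedgePower_dual_hyperconnectivity (n d : ℕ) (hn : 1 ≤ n) (hd : d ≤ n)
    (S : Set (Pairs n)) :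
    LinearIndependent (HK n d) (fun e : S => colH n d e) ↔
      Module.finrank (HK' n (n - d))
          (Submodule.span (HK' n (n - d)) (qVec n (n - d) '' Sᶜ)) =
        Nat.choose (n - d) 2 :=
  wedgePower_dual_hyperconnectivity_general (F := ℚ) (X := Xh n d) (V := vh n (n - d))
    (Nat.add_sub_cancel' hd) (algebraicIndependent_algebraMap_X _ ℚ (HK n d))
    (algebraicIndependent_algebraMap_X _ ℚ (HK' n (n - d))) S
end
end

section
/- Let m, n ≥ 1, 0 ≤ a ≤ m, and 0 ≤ b ≤ n, and set s = m−a and r = n−b. For every subset S ⊆ [m]×[n], the columns of the bipartite rigidity matrix R_{m,n}(a,b) indexed by S are linearly independent (i.e., S is independent in the bipartite rigidity matroid B_{m,n}(a,b)) if and only if the set ([m]×[n]) ∖ S is spanning in the tensor matroid T_{m,n}(m−a, n−b, ℚ). In matroid language: the tensor matroid T_{m,n}(m−a, n−b, 0) is the dual of the bipartite rigidity matroid B_{m,n}(a,b). -/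
open scoped Classical

noncomputable section

/-- The field of fractions of the polynomial ring over `F` in variables
`X i k` (`i ∈ [m]`, `k ∈ [s]`) and `Y j l` (`j ∈ [n]`, `l ∈ [r]`). -/
abbrev TField (F : Type*) [Field F] (m n s r : ℕ) :=
  FractionRing (MvPolynomial ((Fin m × Fin s) ⊕ (Fin n × Fin r)) F)

/-- The vector `u_i ⊗ v_j ∈ K_F^{[s]×[r]}` with `(k,l)`-entry `X_{ik} · Y_{jl}`. -/
noncomputable def tvec (F : Type*) [Field F] (m n s r : ℕ) (e : Fin m × Fin n) :
    Fin s × Fin r → TField F m n s r := fun kl =>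
  algebraMap (MvPolynomial ((Fin m × Fin s) ⊕ (Fin n × Fin r)) F) (TField F m n s r)
      (MvPolynomial.X (Sum.inl (e.1, kl.1))) *
  algebraMap (MvPolynomial ((Fin m × Fin s) ⊕ (Fin n × Fin r)) F) (TField F m n s r)
      (MvPolynomial.X (Sum.inr (e.2, kl.2)))

/-- `E` is independent in the tensor matroid `T_{m,n}(s,r,F)`: the family
`{u_i ⊗ v_j : (i,j) ∈ E}` is linearly independent over `K_F`. -/
def TensorIndep (F : Type*) [Field F] (m n s r : ℕ) (E : Set (Fin m × Fin n)) : Prop :=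
  LinearIndependent (TField F m n s r) (fun e : E => tvec F m n s r e)

/-- `E` is spanning in the tensor matroid `T_{m,n}(s,r,F)`: the family
`{u_i ⊗ v_j : (i,j) ∈ E}` spans `K_F^{[s]×[r]}`. -/
def TensorSpanning (F : Type*) [Field F] (m n s r : ℕ) (E : Set (Fin m × Fin n)) : Prop :=
  Submodule.span (TField F m n s r) (tvec F m n s r '' E) = ⊤

/-- The rational function field `ℚ(x_{pj}, y_{qℓ})` with `(p,j) ∈ [m]×[a]`,
`(q,ℓ) ∈ [n]×[b]`. -/
abbrev RField (m n a b : ℕ) :=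
  FractionRing (MvPolynomial ((Fin m × Fin a) ⊕ (Fin n × Fin b)) ℚ)

/-- The column of the bipartite rigidity matrix `R_{m,n}(a,b)` labeled by
`e ∈ [m]×[n]`: the row labeled `(j,k) ∈ [a]×[n]` has entry `x_{e.1, j}` if `e.2 = k`
and `0` otherwise, and the row labeled `(ℓ,i) ∈ [b]×[m]` has entry `y_{e.2, ℓ}` if
`e.1 = i` and `0` otherwise. -/
noncomputable def rigCol (m n a b : ℕ) (e : Fin m × Fin n) :
    (Fin a × Fin n) ⊕ (Fin b × Fin m) → RField m n a b := fun row =>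
  match row with
  | Sum.inl (j, k) =>
      if e.2 = k then
        algebraMap (MvPolynomial ((Fin m × Fin a) ⊕ (Fin n × Fin b)) ℚ) (RField m n a b)
          (MvPolynomial.X (Sum.inl (e.1, j)))
      else 0
  | Sum.inr (l, i) =>
      if e.1 = i then
        algebraMap (MvPolynomial ((Fin m × Fin a) ⊕ (Fin n × Fin b)) ℚ) (RField m n a b)
          (MvPolynomial.X (Sum.inr (e.2, l)))
      else 0

/-- `G` is independent in the bipartite rigidity matroid `B_{m,n}(a,b)`: the columns of
`R_{m,n}(a,b)` indexed by `G` are linearly independent. -/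
def RigIndep (m n a b : ℕ) (G : Set (Fin m × Fin n)) : Prop :=
  LinearIndependent (RField m n a b) (fun e : G => rigCol m n a b e)

/-!
If `A, U` and `B, V` have as columns bases of mutually orthogonal complements in `K^m` and `K^n`,
then the kernel of the rigidity matrix of `(A, B)` consists of the `m × n` matrices `C` with
`Aᵀ C = 0` and `C B = 0`, which are exactly the matrices `U N Vᵀ`. It is therefore the injective
image of the Kronecker product `U ⊗ V`, and Gale duality identifies independent sets of columns of
the rigidity matrix with complements of spanning sets of rows of `U ⊗ V`.

The two matroids of the theorem live over different fields of generic entries. Being independent and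
being spanning both amount to the nonvanishing of some minor, so either property, once it holds for
one choice of entries, holds for algebraically independent ones. Since generic matrices have full
column rank, they admit orthogonal complements, and transferring to and from those gives the two
implications.
-/

open scoped Kronecker Matrix
open Matrix MvPolynomial

section GaleDuality

variable {K ε ι κ : Type*}

theorem linearIndependent_col_iff_mulVec_eq_zero [CommRing K] [Fintype κ] {M : Matrix ι κ K} :
    LinearIndependent K M.col ↔ ∀ x, M *ᵥ x = 0 → x = 0 := by
  rw [← mulVec_injective_iff, ← coe_mulVecLin, injective_iff_map_eq_zero]

theorem linearIndepOn_col_iff_mulVec_eq_zero [CommRing K] [Fintype κ] (M : Matrix ι κ K)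
    (s : Set κ) :
    LinearIndepOn K M.col s ↔ ∀ c : κ → K, (∀ j ∉ s, c j = 0) → M *ᵥ c = 0 → c = 0 := by
  rw [linearIndepOn_iff, (Finsupp.linearEquivFunOnFinite K K κ).symm.surjective.forall]
  refine forall_congr' fun c => ?_
  have hcomb : Finsupp.linearCombination K M.col ((Finsupp.linearEquivFunOnFinite K K κ).symm c) =
      M *ᵥ c := by
    rw [Finsupp.linearCombination_eq_fintype_linearCombination_apply]
    ext i
    simp [Fintype.linearCombination_apply, mulVec, dotProduct, mul_comm]
  rw [hcomb, Finsupp.mem_supported', EmbeddingLike.map_eq_zero_iff]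
  rfl

variable [Field K]

theorem span_range_row_eq_top_iff [Finite κ] (M : Matrix ι κ K) :
    Submodule.span K (Set.range M.row) = ⊤ ↔ LinearIndependent K M.col := by
  classical
  cases nonempty_fintype κ
  have mem_annihilator_iff (x : κ → K) :
      dotProductEquiv K κ x ∈ (Submodule.span K (Set.range M.row)).dualAnnihilator ↔
        M *ᵥ x = 0 := by
    rw [← SetLike.mem_coe, Submodule.coe_dualAnnihilator_span]
    simp [Set.range_subset_iff, funext_iff, mulVec, row_def, dotProduct_comm]
  rw [← Submodule.dualAnnihilator_eq_bot_iff, Submodule.eq_bot_iff,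
    (dotProductEquiv K κ).surjective.forall, linearIndependent_col_iff_mulVec_eq_zero]
  simp only [mem_annihilator_iff, EmbeddingLike.map_eq_zero_iff]

theorem span_row_image_eq_top_iff_s2 [Finite κ] (M : Matrix ι κ K) (s : Set ι) :
    Submodule.span K (M.row '' s) = ⊤ ↔
      LinearIndependent K (M.submatrix ((↑) : s → ι) id).col := by
  rw [← span_range_row_eq_top_iff, Set.image_eq_range]
  rfl

theorem linearIndepOn_col_iff_span_row_compl_eq_top_s2 [Fintype ε] [Fintype κ]
    {M : Matrix ι ε K} {T : Matrix ε κ K} (hT : LinearIndependent K T.col)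
    (hTM : Function.Exact T.mulVec M.mulVec) (s : Set ε) :
    LinearIndepOn K M.col s ↔ Submodule.span K (T.row '' sᶜ) = ⊤ := by
  rw [linearIndepOn_col_iff_mulVec_eq_zero, span_row_image_eq_top_iff_s2,
    linearIndependent_col_iff_mulVec_eq_zero]
  constructor
  · intro h x hx
    have hTx : T *ᵥ x = 0 :=
      h _ (fun e he => congrFun hx ⟨e, he⟩) (hTM.apply_apply_eq_zero x)
    exact linearIndependent_col_iff_mulVec_eq_zero.1 hT x hTx
  · intro h c hc hMc
    obtain ⟨x, rfl⟩ := (hTM c).1 hMc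
    have hx : x = 0 := h x (funext fun e => hc e e.2)
    rw [hx, mulVec_zero]

end GaleDuality

section OrthogonalComplement

variable {K ι κ α σ : Type*}

theorem eq_zero_of_mul_eq_zero_of_linearIndependent_col [CommRing K] [Finite κ] [Fintype σ]
    {U : Matrix ι σ K} (hU : LinearIndependent K U.col) {D : Matrix σ κ K} (h : U * D = 0) :
    D = 0 := by
  cases nonempty_fintype κ
  refine mulVec_injective (funext fun v => mulVec_injective_iff.2 hU ?_)
  simp only [mulVec_mulVec, h, zero_mulVec, mulVec_zero]

variable [Field K] [Fintype ι] [Fintype α] [Fintype σ]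

/-- The columns of `A` and of `U` are bases of two subspaces of `K^ι` that are orthogonal
complements of each other for the dot product. -/
structure IsOrthogonalComplement (A : Matrix ι α K) (U : Matrix ι σ K) : Prop where
  linearIndependent_left : LinearIndependent K A.col
  linearIndependent_right : LinearIndependent K U.col
  transpose_mul_eq_zero : Aᵀ * U = 0
  card_add_card : Fintype.card α + Fintype.card σ = Fintype.card ι

theorem IsOrthogonalComplement.symm {A : Matrix ι α K} {U : Matrix ι σ K}
    (h : IsOrthogonalComplement A U) : IsOrthogonalComplement U A where
  linearIndependent_left := h.linearIndependent_right
  linearIndependent_right := h.linearIndependent_left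
  transpose_mul_eq_zero := by
    rw [← transpose_transpose A, ← transpose_mul, h.transpose_mul_eq_zero, transpose_zero]
  card_add_card := by rw [add_comm, h.card_add_card]

theorem exists_isOrthogonalComplement {A : Matrix ι α K} (hA : LinearIndependent K A.col)
    (hcard : Fintype.card α + Fintype.card σ = Fintype.card ι) :
    ∃ U : Matrix ι σ K, IsOrthogonalComplement A U := by
  have hker : Fintype.card σ ≤ Module.finrank K (LinearMap.ker Aᵀ.mulVecLin) := by
    have hrank := Aᵀ.mulVecLin.finrank_range_add_finrank_ker
    have hle := (LinearMap.range Aᵀ.mulVecLin).finrank_le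
    rw [Module.finrank_fintype_fun_eq_card] at hrank hle
    omega
  obtain ⟨u, hu⟩ := exists_linearIndependent_of_le_finrank hker
  have hu' : LinearIndependent K fun k => (u (Fintype.equivFin σ k) : ι → K) :=
    (hu.map' _ (Submodule.ker_subtype _)).comp _ (Fintype.equivFin σ).injective
  refine ⟨(Matrix.of fun k => (u (Fintype.equivFin σ k) : ι → K))ᵀ, hA, hu', ?_, hcard⟩
  ext j k
  exact congrFun (LinearMap.mem_ker.1 (u (Fintype.equivFin σ k)).2) j

theorem IsOrthogonalComplement.exact {A : Matrix ι α K} {U : Matrix ι σ K}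
    (h : IsOrthogonalComplement A U) : Function.Exact U.mulVec Aᵀ.mulVec := by
  have hle : LinearMap.range U.mulVecLin ≤ LinearMap.ker Aᵀ.mulVecLin := by
    rw [LinearMap.range_le_ker_iff, ← mulVecLin_mul, h.transpose_mul_eq_zero, mulVecLin_zero]
  have hrankA : Aᵀ.rank = Fintype.card α := LinearIndependent.rank_matrix h.linearIndependent_left
  have hrankU : U.rank = Fintype.card σ := by
    rw [← rank_transpose]
    exact LinearIndependent.rank_matrix h.linearIndependent_right
  have hfinrank : Module.finrank K (LinearMap.range U.mulVecLin) =
      Module.finrank K (LinearMap.ker Aᵀ.mulVecLin) := by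
    have hker := Aᵀ.mulVecLin.finrank_range_add_finrank_ker
    rw [Module.finrank_fintype_fun_eq_card, ← h.card_add_card] at hker
    rw [rank] at hrankA hrankU
    omega
  exact LinearMap.exact_iff.2 (Submodule.eq_of_le_of_finrank_eq hle hfinrank).symm

theorem IsOrthogonalComplement.exists_eq_mul_transpose {A : Matrix ι α K} {U : Matrix ι σ K}
    (h : IsOrthogonalComplement A U) {C : Matrix κ ι K} (hC : C * A = 0) :
    ∃ D : Matrix κ σ K, C = D * Uᵀ := by
  have hrow (i : κ) : ∃ d, U *ᵥ d = C i := by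
    refine (h.exact (C i)).1 ?_
    rw [mulVec_transpose, ← mul_apply_eq_vecMul, hC]
    rfl
  choose D hD using hrow
  refine ⟨Matrix.of D, ?_⟩
  ext i j
  rw [← hD, ← vecMul_transpose]
  rfl

end OrthogonalComplement

section Rigidity

variable {K ι κ α β σ τ : Type*}

/-- The bipartite rigidity matrix `R_{m,n}(a,b)`, with the generic matrices of variables replaced by
arbitrary matrices `A = (x_{pj})` and `B = (y_{qℓ})`. -/
def rigidityMatrix [DecidableEq ι] [DecidableEq κ] [Zero K] (A : Matrix ι α K) (B : Matrix κ β K) :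
    Matrix ((α × κ) ⊕ (β × ι)) (ι × κ) K :=
  Matrix.of fun row e => match row with
    | Sum.inl (j, k) => if e.2 = k then A e.1 j else 0
    | Sum.inr (l, i) => if e.1 = i then B e.2 l else 0

theorem rigidityMatrix_map {L F : Type*} [Zero K] [Zero L] [FunLike F K L] [ZeroHomClass F K L]
    [DecidableEq ι] [DecidableEq κ] (f : F) (A : Matrix ι α K) (B : Matrix κ β K) :
    (rigidityMatrix A B).map f = rigidityMatrix (A.map f) (B.map f) := by
  ext (⟨j, k⟩ | ⟨l, i⟩) e <;> simp [rigidityMatrix, apply_ite f]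

-- `vec` stacks columns, so a vector indexed by `ι × κ` is `vec C` for a `κ × ι` matrix `C`.
theorem rigidityMatrix_mulVec_vec [CommSemiring K] [Fintype ι] [Fintype κ] [DecidableEq ι]
    [DecidableEq κ] (A : Matrix ι α K) (B : Matrix κ β K) (C : Matrix κ ι K) :
    rigidityMatrix A B *ᵥ vec C = Sum.elim (vec (C * A)) (vec (Cᵀ * B)) := by
  ext (⟨j, k⟩ | ⟨l, i⟩) <;>
    simp [rigidityMatrix, mulVec, dotProduct, mul_apply, Fintype.sum_prod_type, mul_comm]

theorem linearIndependent_col_kronecker [CommRing K] [Finite ι] [Finite σ] [Finite τ]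
    {U : Matrix ι σ K} {V : Matrix κ τ K} (hU : LinearIndependent K U.col)
    (hV : LinearIndependent K V.col) : LinearIndependent K (U ⊗ₖ V).col := by
  cases nonempty_fintype σ
  cases nonempty_fintype τ
  refine linearIndependent_col_iff_mulVec_eq_zero.2 fun x hx => ?_
  obtain ⟨N, rfl⟩ := vec_bijective.surjective x
  rw [kronecker_mulVec_vec, vec_eq_zero_iff, Matrix.mul_assoc] at hx
  have hN : N * Uᵀ = 0 := eq_zero_of_mul_eq_zero_of_linearIndependent_col hV hx
  rw [← transpose_eq_zero, transpose_mul, transpose_transpose] at hN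
  rw [vec_eq_zero_iff, ← transpose_eq_zero]
  exact eq_zero_of_mul_eq_zero_of_linearIndependent_col hU hN

variable [Field K] [DecidableEq ι] [DecidableEq κ] [Fintype ι] [Fintype κ] [Fintype α] [Fintype β]
  [Fintype σ] [Fintype τ] {A : Matrix ι α K} {B : Matrix κ β K} {U : Matrix ι σ K}
  {V : Matrix κ τ K}

theorem exact_kronecker_rigidityMatrix (hAU : IsOrthogonalComplement A U)
    (hBV : IsOrthogonalComplement B V) :
    Function.Exact (U ⊗ₖ V).mulVec (rigidityMatrix A B).mulVec := by
  intro c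
  obtain ⟨C, rfl⟩ := vec_bijective.surjective c
  constructor
  · intro hC
    rw [rigidityMatrix_mulVec_vec, ← Sum.elim_zero_zero, Sum.elim_eq_iff, vec_eq_zero_iff,
      vec_eq_zero_iff] at hC
    obtain ⟨D, rfl⟩ := hAU.exists_eq_mul_transpose hC.1
    have hDB : Dᵀ * B = 0 := by
      refine eq_zero_of_mul_eq_zero_of_linearIndependent_col hAU.linearIndependent_right ?_
      rw [← Matrix.mul_assoc, ← hC.2, transpose_mul, transpose_transpose]
    obtain ⟨N, hN⟩ := hBV.exists_eq_mul_transpose hDB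
    refine ⟨vec Nᵀ, ?_⟩
    rw [kronecker_mulVec_vec, ← transpose_transpose D, hN, transpose_mul, transpose_transpose]
  · rintro ⟨x, hx⟩
    obtain ⟨N, rfl⟩ := vec_bijective.surjective x
    rw [kronecker_mulVec_vec, vec_inj] at hx
    rw [rigidityMatrix_mulVec_vec, ← hx, ← Sum.elim_zero_zero, Sum.elim_eq_iff, vec_eq_zero_iff,
      vec_eq_zero_iff]
    constructor
    · rw [Matrix.mul_assoc, hAU.symm.transpose_mul_eq_zero, Matrix.mul_zero]
    · rw [transpose_mul, transpose_mul, Matrix.mul_assoc, Matrix.mul_assoc,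
        hBV.symm.transpose_mul_eq_zero, Matrix.mul_zero, Matrix.mul_zero]

theorem linearIndepOn_col_rigidityMatrix_iff (hAU : IsOrthogonalComplement A U)
    (hBV : IsOrthogonalComplement B V) (S : Set (ι × κ)) :
    LinearIndepOn K (rigidityMatrix A B).col S ↔
      Submodule.span K ((U ⊗ₖ V).row '' Sᶜ) = ⊤ :=
  linearIndepOn_col_iff_span_row_compl_eq_top_s2
    (linearIndependent_col_kronecker hAU.linearIndependent_right hBV.linearIndependent_right)
    (exact_kronecker_rigidityMatrix hAU hBV) S

end Rigidity

section Specialization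

theorem exists_submatrix_det_ne_zero {K ι κ : Type*} [Field K] [Fintype κ] [DecidableEq κ]
    {M : Matrix ι κ K} (hM : LinearIndependent K M.col) :
    ∃ f : κ → ι, (M.submatrix f id).det ≠ 0 := by
  obtain ⟨η, g, -, hspan, hli⟩ := exists_linearIndependent' K M.row
  rw [(span_range_row_eq_top_iff M).2 hM] at hspan
  let e : κ ≃ η := (Pi.basisFun K κ).indexEquiv (.mk hli hspan.ge)
  have hrow : LinearIndependent K (M.submatrix (g ∘ e) id).row := hli.comp e e.injective
  refine ⟨g ∘ e, IsUnit.ne_zero ?_⟩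
  rwa [← isUnit_iff_isUnit_det, ← linearIndependent_rows_iff_isUnit]

variable {R K L η ι κ α : Type*} [CommRing R] [Field K] [Field L] [Algebra R K] [Algebra R L]

-- A maximal minor that is nonzero at `y` is a nonzero polynomial, hence nonzero at `x`.
theorem linearIndependent_col_map_aeval [Finite κ] {x : η → L} (hx : AlgebraicIndependent R x)
    (y : η → K) {P : Matrix ι κ (MvPolynomial η R)}
    (hP : LinearIndependent K (P.map (aeval y)).col) :
    LinearIndependent L (P.map (aeval x)).col := by
  classical
  cases nonempty_fintype κ
  obtain ⟨f, hf⟩ := exists_submatrix_det_ne_zero hP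
  have hdet : (P.submatrix f id).det ≠ 0 := fun h0 => hf <| by
    rw [submatrix_map, ← AlgHom.mapMatrix_apply, ← AlgHom.map_det, h0, map_zero]
  have hdetx : ((P.map (aeval x)).submatrix f id).det ≠ 0 := by
    rw [submatrix_map, ← AlgHom.mapMatrix_apply, ← AlgHom.map_det]
    exact (map_ne_zero_iff _ hx).2 hdet
  exact (linearIndependent_cols_of_det_ne_zero hdetx).of_comp (LinearMap.funLeft L L f)

theorem linearIndepOn_col_map_aeval [Finite κ] {x : η → L} (hx : AlgebraicIndependent R x)
    (y : η → K) {P : Matrix ι κ (MvPolynomial η R)} {s : Set κ}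
    (hP : LinearIndepOn K (P.map (aeval y)).col s) : LinearIndepOn L (P.map (aeval x)).col s :=
  linearIndependent_col_map_aeval (P := P.submatrix id ((↑) : s → κ)) hx y hP

theorem span_row_image_map_aeval_eq_top [Finite κ] {x : η → L} (hx : AlgebraicIndependent R x)
    (y : η → K) {P : Matrix ι κ (MvPolynomial η R)} {s : Set ι}
    (hP : Submodule.span K ((P.map (aeval y)).row '' s) = ⊤) :
    Submodule.span L ((P.map (aeval x)).row '' s) = ⊤ := by
  rw [span_row_image_eq_top_iff_s2] at hP ⊢
  exact linearIndependent_col_map_aeval (P := P.submatrix ((↑) : s → ι) id) hx y hP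

theorem linearIndependent_col_of_algebraicIndependent_s2 [Fintype ι] [Fintype α]
    {A : Matrix ι α L} (hA : AlgebraicIndependent R fun p : ι × α => A p.1 p.2)
    (hcard : Fintype.card α ≤ Fintype.card ι) : LinearIndependent L A.col := by
  classical
  obtain ⟨g⟩ := Function.Embedding.nonempty_of_card_le hcard
  let y : ι × α → L := fun p => Pi.basisFun L ι (g p.2) p.1
  have hy : LinearIndependent L ((mvPolynomialX ι α R).map (aeval y)).col := by
    have hcol : ((mvPolynomialX ι α R).map (aeval y)).col = Pi.basisFun L ι ∘ g := by
      ext j i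
      simp [y]
    rw [hcol]
    exact (Pi.basisFun L ι).linearIndependent.comp g g.injective
  have hA' : (mvPolynomialX ι α R).map (aeval fun p : ι × α => A p.1 p.2) = A := by
    ext i j
    simp
  rw [← hA']
  exact linearIndependent_col_map_aeval hA y hy

end Specialization

section Variables

variable {R K ι κ α β : Type*}

/-- The family of all entries of the pair `(A, B)`. The pair is "totally generic" when this family
is algebraically independent. -/
def pairEntries (A : Matrix ι α K) (B : Matrix κ β K) : (ι × α) ⊕ (κ × β) → K :=
  Sum.elim (fun p => A p.1 p.2) (fun q => B q.1 q.2)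

/-- The first of two matrices whose entries are distinct variables. -/
def variablesLeft (R ι κ α β : Type*) [CommRing R] :
    Matrix ι α (MvPolynomial ((ι × α) ⊕ (κ × β)) R) :=
  Matrix.of fun i j => X (Sum.inl (i, j))

/-- The second of two matrices whose entries are distinct variables. -/
def variablesRight (R ι κ α β : Type*) [CommRing R] :
    Matrix κ β (MvPolynomial ((ι × α) ⊕ (κ × β)) R) :=
  Matrix.of fun i j => X (Sum.inr (i, j))

variable [CommRing R] [CommRing K] [Algebra R K]

theorem rigidityMatrix_variables_map_aeval [DecidableEq ι] [DecidableEq κ] (A : Matrix ι α K)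
    (B : Matrix κ β K) :
    (rigidityMatrix (variablesLeft R ι κ α β) (variablesRight R ι κ α β)).map
      (aeval (pairEntries A B)) = rigidityMatrix A B := by
  rw [rigidityMatrix_map]
  congr 1 <;> ext <;> simp [variablesLeft, variablesRight, pairEntries]

theorem kronecker_variables_map_aeval (A : Matrix ι α K) (B : Matrix κ β K) :
    (variablesLeft R ι κ α β ⊗ₖ variablesRight R ι κ α β).map (aeval (pairEntries A B)) =
      A ⊗ₖ B := by
  ext
  simp [variablesLeft, variablesRight, pairEntries]

theorem algebraicIndependent_pairEntries_variables [Algebra (MvPolynomial ((ι × α) ⊕ (κ × β)) R) K]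
    [IsScalarTower R (MvPolynomial ((ι × α) ⊕ (κ × β)) R) K]
    [FaithfulSMul (MvPolynomial ((ι × α) ⊕ (κ × β)) R) K] :
    AlgebraicIndependent R
      (pairEntries ((variablesLeft R ι κ α β).map (algebraMap _ K))
        ((variablesRight R ι κ α β).map (algebraMap _ K))) := by
  have hX := (algebraicIndependent_X ((ι × α) ⊕ (κ × β)) R).map'
    (f := IsScalarTower.toAlgHom R _ K) (FaithfulSMul.algebraMap_injective _ K)
  convert hX using 1
  ext (p | q) <;> rfl

end Variables

theorem tensor_dual_bipartite_rigidity_general {R K L ι κ α β σ τ : Type*} [CommRing R] [Field K]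
    [Field L] [Algebra R K] [Algebra R L] [Fintype ι] [Fintype κ] [Fintype α] [Fintype β]
    [Fintype σ] [Fintype τ] [DecidableEq ι] [DecidableEq κ]
    (hι : Fintype.card α + Fintype.card σ = Fintype.card ι)
    (hκ : Fintype.card β + Fintype.card τ = Fintype.card κ)
    {A : Matrix ι α K} {B : Matrix κ β K} {U : Matrix ι σ L} {V : Matrix κ τ L}
    (hAB : AlgebraicIndependent R (pairEntries A B))
    (hUV : AlgebraicIndependent R (pairEntries U V)) (S : Set (ι × κ)) :
    LinearIndepOn K (rigidityMatrix A B).col S ↔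
      Submodule.span L ((U ⊗ₖ V).row '' Sᶜ) = ⊤ := by
  constructor
  · intro hS
    have hA : LinearIndependent K A.col := linearIndependent_col_of_algebraicIndependent_s2
      (hAB.comp Sum.inl Sum.inl_injective) (by lia)
    have hB : LinearIndependent K B.col := linearIndependent_col_of_algebraicIndependent_s2
      (hAB.comp Sum.inr Sum.inr_injective) (by lia)
    obtain ⟨U', hAU'⟩ := exists_isOrthogonalComplement hA hι
    obtain ⟨V', hBV'⟩ := exists_isOrthogonalComplement hB hκ
    rw [linearIndepOn_col_rigidityMatrix_iff hAU' hBV',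
      ← kronecker_variables_map_aeval (R := R) U' V'] at hS
    rw [← kronecker_variables_map_aeval (R := R) U V]
    exact span_row_image_map_aeval_eq_top hUV _ hS
  · intro hS
    have hU : LinearIndependent L U.col := linearIndependent_col_of_algebraicIndependent_s2
      (hUV.comp Sum.inl Sum.inl_injective) (by lia)
    have hV : LinearIndependent L V.col := linearIndependent_col_of_algebraicIndependent_s2
      (hUV.comp Sum.inr Sum.inr_injective) (by lia)
    obtain ⟨A', hUA'⟩ := exists_isOrthogonalComplement hU ((add_comm _ _).trans hι)
    obtain ⟨B', hVB'⟩ := exists_isOrthogonalComplement hV ((add_comm _ _).trans hκ)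
    rw [← linearIndepOn_col_rigidityMatrix_iff hUA'.symm hVB'.symm,
      ← rigidityMatrix_variables_map_aeval (R := R) A' B'] at hS
    rw [← rigidityMatrix_variables_map_aeval (R := R) A B]
    exact linearIndepOn_col_map_aeval hAB _ hS

theorem rigCol_eq_col_rigidityMatrix (m n a b : ℕ) :
    rigCol m n a b = (rigidityMatrix
      ((variablesLeft ℚ (Fin m) (Fin n) (Fin a) (Fin b)).map (algebraMap _ (RField m n a b)))
      ((variablesRight ℚ (Fin m) (Fin n) (Fin a) (Fin b)).map (algebraMap _ _))).col := by
  ext e (⟨j, k⟩ | ⟨l, i⟩) <;> rfl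

theorem tvec_eq_row_kronecker (F : Type*) [Field F] (m n s r : ℕ) :
    tvec F m n s r =
      ((variablesLeft F (Fin m) (Fin n) (Fin s) (Fin r)).map (algebraMap _ (TField F m n s r)) ⊗ₖ
        (variablesRight F (Fin m) (Fin n) (Fin s) (Fin r)).map (algebraMap _ _)).row :=
  rfl

theorem tensor_dual_bipartite_rigidity (m n a b : ℕ) (hm : 1 ≤ m) (hn : 1 ≤ n)
    (ha : a ≤ m) (hb : b ≤ n) (S : Set (Fin m × Fin n)) :
    RigIndep m n a b S ↔ TensorSpanning ℚ m n (m - a) (n - b) Sᶜ := by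
  rw [RigIndep, TensorSpanning, rigCol_eq_col_rigidityMatrix, tvec_eq_row_kronecker]
  exact tensor_dual_bipartite_rigidity_general (R := ℚ) (by simp [ha]) (by simp [hb])
    algebraicIndependent_pairEntries_variables algebraicIndependent_pairEntries_variables S
end
end

section
/- Let F be a field and let m, n, s, r be integers with 0 ≤ s ≤ m and 0 ≤ r ≤ n. Let A_1, …, A_m ⊆ [n] be pairwise disjoint sets, and set E = ∪_{i∈[m]} {i}×A_i ⊆ [m]×[n]. Then E is independent in the tensor matroid T_{m,n}(s,r,F) if and only if |A_i| ≤ r for every i ∈ [m] and ∑_{i=1}^m |A_i| ≤ s·r. -/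
open scoped Classical

noncomputable section

/-!
Necessity is a dimension count: the vectors in row `i` lie in `u_i ⊗ K^r`, and all of them lie in
`K^{[s]×[r]}`. For sufficiency it is enough to find one specialization of the `u_i` and `v_j` at
which the vectors are independent, because a nonvanishing minor lifts to the generic point. List
`E` row by row and colour the `p`-th element by `p mod r`. A row has at most `r` elements and they
are consecutive, so their colours differ; and every colour occurs at most `s` times. Disjointness
of the `A_i` lets each `v_j` be specialized to the basis vector of the colour of its column, while
the `u_i` go to distinct points of the moment curve. The vectors of one colour are then at most
`s` distinct points of the moment curve, and different colours have disjoint supports.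
-/

open Function Finset

section Coloring

theorem val_lt_add_of_monotone_of_card_fiber_le {α : Type*} [PartialOrder α] [DecidableEq α]
    {N r : ℕ} {g : Fin N → α} (hg : Monotone g) (hcard : ∀ a, #{p | g p = a} ≤ r) {p q : Fin N}
    (hpq : g p = g q) : (q : ℕ) < p + r := by
  have hsub : Finset.Icc p q ⊆ ({x | g x = g p} : Finset (Fin N)) := fun x hx => by
    obtain ⟨hpx, hxq⟩ := Finset.mem_Icc.mp hx
    exact (Finset.mem_filter_univ x).mpr (le_antisymm ((hg hxq).trans_eq hpq.symm) (hg hpx))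
  have hle := (Finset.card_le_card hsub).trans (hcard (g p))
  rw [Fin.card_Icc] at hle
  omega

theorem injective_prodMk_mod_of_monotone {α : Type*} [PartialOrder α] [DecidableEq α] {N r : ℕ}
    {g : Fin N → α} (hg : Monotone g) (hcard : ∀ a, #{p | g p = a} ≤ r) :
    Injective fun p : Fin N => (g p, (p : ℕ) % r) := by
  intro p q hpq
  obtain ⟨hfiber, hmod⟩ := Prod.mk.inj hpq
  have hq := val_lt_add_of_monotone_of_card_fiber_le hg hcard hfiber
  have hp := val_lt_add_of_monotone_of_card_fiber_le hg hcard hfiber.symm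
  exact Fin.ext (Nat.ModEq.eq_of_abs_lt hmod (by rw [abs_lt]; omega))

theorem card_filter_mod_eq_le {N r s : ℕ} (hN : N ≤ s * r) (l : ℕ) :
    #{p : Fin N | (p : ℕ) % r = l} ≤ s := by
  rw [← Finset.card_range s]
  refine Finset.card_le_card_of_injOn (fun p => (p : ℕ) / r) (fun p _ => ?_) ?_
  · exact Finset.mem_coe.mpr (Finset.mem_range.mpr
      (Nat.div_lt_of_lt_mul (mul_comm s r ▸ p.2.trans_le hN)))
  · intro p hp q hq hdiv
    simp only [Finset.coe_filter, Finset.mem_univ, true_and, Set.mem_ofPred_eq] at hp hq hdiv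
    rw [Fin.ext_iff, ← Nat.div_add_mod p r, ← Nat.div_add_mod q r, hdiv, hp, hq]

theorem exists_monotone_comp_equiv_fin {ι α : Type*} [Fintype ι] [LinearOrder α] (f : ι → α) :
    ∃ e : Fin (Fintype.card ι) ≃ ι, Monotone (f ∘ e) :=
  let e₀ := (Fintype.equivFin ι).symm
  ⟨(Tuple.sort (f ∘ e₀)).trans e₀, Tuple.monotone_sort (f ∘ e₀)⟩

theorem exists_coloring_of_card_fiber_le {ι α β : Type*} [Fintype ι] [Fintype β] (f : ι → α)
    {s : ℕ} (hf : ∀ a, #{e | f e = a} ≤ Fintype.card β)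
    (hι : Fintype.card ι ≤ s * Fintype.card β) :
    ∃ c : ι → β, (Injective fun e => (f e, c e)) ∧ ∀ b, #{e | c e = b} ≤ s := by
  let _ : LinearOrder α := IsWellOrder.linearOrder WellOrderingRel
  obtain ⟨enum, hmono⟩ := exists_monotone_comp_equiv_fin f
  have hcard (a : α) : #{p | (f ∘ enum) p = a} ≤ Fintype.card β := by
    rw [← Finset.card_map enum.toEmbedding]
    refine (Finset.card_le_card fun e he => ?_).trans (hf a)
    obtain ⟨p, hp, rfl⟩ := Finset.mem_map.mp he
    simpa using hp
  have hlt (e : ι) : (enum.symm e : ℕ) % Fintype.card β < Fintype.card β :=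
    Nat.mod_lt _ (Nat.pos_of_mul_pos_left ((Nat.zero_le _).trans_lt ((enum.symm e).2.trans_le hι)))
  refine ⟨fun e => (Fintype.equivFin β).symm ⟨_, hlt e⟩, fun e e' h => ?_, fun b => ?_⟩
  · obtain ⟨hfiber, hcolor⟩ := Prod.mk.inj h
    refine enum.symm.injective (injective_prodMk_mod_of_monotone hmono hcard (Prod.ext ?_ ?_))
    · simpa using hfiber
    · simpa using hcolor
  · refine le_trans ?_ (card_filter_mod_eq_le hι (Fintype.equivFin β b))
    rw [← Finset.card_map enum.symm.toEmbedding]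
    refine Finset.card_le_card fun p hp => ?_
    obtain ⟨e, he, rfl⟩ := Finset.mem_map.mp hp
    obtain rfl := (Finset.mem_filter_univ e).mp he
    simp

end Coloring

section Tensor

variable {ι κ μ I J K : Type*}

/-- The coordinates, in the product basis, of the tensor product `u ⊗ v` of two coordinate vectors,
as a linear map in `v`. -/
def tensorVec [CommSemiring K] (u : κ → K) : (μ → K) →ₗ[K] (κ × μ → K) :=
  LinearMap.pi fun kl => u kl.1 • LinearMap.proj kl.2

theorem tensorVec_apply [CommSemiring K] (u : κ → K) (v : μ → K) (kl : κ × μ) :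
    tensorVec u v kl = u kl.1 * v kl.2 := rfl

theorem linearIndependent_tensorVec_single [CommRing K] {u : ι → κ → K} {c : ι → μ}
    (h : ∀ l, LinearIndependent K fun e : {e // c e = l} => u e) :
    LinearIndependent K fun e => tensorVec (u e) (Pi.single (c e) 1) := by
  refine linearIndependent_iff'.mpr fun S g hg e he => ?_
  refine linearIndependent_iff'.mp (h (c e)) (S.subtype (c · = c e)) (fun e' => g e') ?_ ⟨e, rfl⟩
    (Finset.mem_subtype.mpr he)
  funext k
  have hcoord := congrFun hg (k, c e)
  simp only [Finset.sum_apply, Pi.smul_apply, tensorVec_apply, Pi.single_apply, smul_eq_mul,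
    mul_ite, mul_one, mul_zero, Pi.zero_apply] at hcoord ⊢
  rw [← Finset.sum_filter] at hcoord
  rw [Finset.sum_subtype_eq_sum_filter (f := fun e' => g e' * u e' k)]
  simpa only [eq_comm] using hcoord

theorem linearIndependent_pow_equivFin [CommRing K] [IsDomain K] [Fintype ι] [Fintype κ]
    {t : ι → K} (ht : Injective t) (hcard : Fintype.card ι ≤ Fintype.card κ) :
    LinearIndependent K fun e (k : κ) => t e ^ (Fintype.equivFin κ k : ℕ) := by
  let enum := (Fintype.equivFin ι).symm
  let coord : Fin (Fintype.card ι) → κ := (Fintype.equivFin κ).symm ∘ Fin.castLE hcard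
  have hdet : (Matrix.vandermonde (t ∘ enum)).det ≠ 0 :=
    Matrix.det_vandermonde_ne_zero_iff.mpr (ht.comp enum.injective)
  rw [← linearIndependent_equiv enum]
  refine LinearIndependent.of_comp (LinearMap.funLeft K K coord) ?_
  convert Matrix.linearIndependent_rows_of_det_ne_zero hdet using 1
  funext a b
  simp [coord, Matrix.vandermonde_apply]

theorem exists_linearIndependent_tensorVec [CommRing K] [IsDomain K] [Fintype ι] [Fintype κ]
    [Fintype μ] {t : I → K} (ht : Injective t) {row : ι → I} {col : ι → J} (hcol : Injective col)
    (hrow : ∀ i, #{e | row e = i} ≤ Fintype.card μ)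
    (hι : Fintype.card ι ≤ Fintype.card κ * Fintype.card μ) :
    ∃ (u : I → κ → K) (v : J → μ → K),
      LinearIndependent K fun e => tensorVec (u (row e)) (v (col e)) := by
  obtain ⟨c, hinj, hclass⟩ := exists_coloring_of_card_fiber_le row hrow hι
  refine ⟨fun i k => t i ^ (Fintype.equivFin κ k : ℕ),
    extend col (fun e => Pi.single (c e) 1) 0, ?_⟩
  simp only [hcol.extend_apply]
  refine linearIndependent_tensorVec_single fun l => linearIndependent_pow_equivFin
    (t := fun e : {e // c e = l} => t (row e)) (fun e e' h => ?_) ?_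
  · exact Subtype.ext (hinj (Prod.ext (ht h) (e.2.trans e'.2.symm)))
  · rw [Fintype.card_subtype]
    exact hclass l

end Tensor

section Specialization

variable {ι τ S K L : Type*}

theorem exists_det_ne_zero_of_linearIndependent [Field K] [Fintype ι] {w : ι → τ → K}
    (hw : LinearIndependent K w) : ∃ a : ι → τ, (Matrix.of fun e e' => w e (a e')).det ≠ 0 := by
  have hspan : Submodule.span K (Set.range fun j e => w e j) = ⊤ :=
    span_flip_eq_top_iff_linearIndependent.mpr hw
  obtain ⟨κ, a, -, hspan_a, hli⟩ := exists_linearIndependent' K fun j e => w e j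
  let b : Module.Basis κ K (ι → K) := .mk hli (hspan_a.trans hspan).ge
  let enum : ι ≃ κ := (Pi.basisFun K ι).indexEquiv b
  refine ⟨a ∘ enum, ?_⟩
  rw [← Matrix.det_transpose]
  exact ((Matrix.isUnit_iff_isUnit_det _).mp
    (Matrix.linearIndependent_rows_iff_isUnit.mp (hli.comp enum enum.injective))).ne_zero

theorem linearIndependent_map_of_linearIndependent_map [Finite ι] [CommRing S] [Field L]
    [CommRing K] [IsDomain K] (φ : S →+* L) {ψ : S →+* K} (hψ : Injective ψ) {w : ι → τ → S}
    (h : LinearIndependent L fun e j => φ (w e j)) :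
    LinearIndependent K fun e j => ψ (w e j) := by
  let _ := Fintype.ofFinite ι
  obtain ⟨a, ha⟩ := exists_det_ne_zero_of_linearIndependent h
  let M : Matrix ι ι S := Matrix.of fun e e' => w e (a e')
  have hM : M.det ≠ 0 := fun h0 => ha ((φ.map_det M).symm.trans (by rw [h0, map_zero]))
  have hMψ : (ψ.mapMatrix M).det ≠ 0 := by
    rwa [← RingHom.map_det, map_ne_zero_iff ψ hψ]
  exact LinearIndependent.of_comp (LinearMap.funLeft K K a)
    (Matrix.linearIndependent_rows_of_det_ne_zero hMψ)

end Specialization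

section General

variable {ι κ μ I J R K : Type*} [Fintype μ] [CommRing K]

theorem card_row_le_of_linearIndependent [Nontrivial K] [Fintype ι] {row : ι → I} {x : I → κ → K}
    {y : ι → μ → K} (h : LinearIndependent K fun e => tensorVec (x (row e)) (y e)) (i : I) :
    #{e | row e = i} ≤ Fintype.card μ := by
  have hy : LinearIndependent K fun e : {e // row e = i} => y e := by
    refine LinearIndependent.of_comp (tensorVec (x i)) ?_
    convert h.comp _ Subtype.val_injective using 1
    funext e
    simp only [comp_apply, e.2]
  simpa only [Fintype.card_subtype, Module.finrank_fintype_fun_eq_card] using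
    hy.fintype_card_le_finrank

variable [Fintype κ] [CommRing R] [IsDomain K] [Algebra R K]

theorem linearIndependent_tensorVec_of_algebraicIndependent [Fintype ι] {row : ι → I}
    {col : ι → J} (hcol : Injective col) {x : I → κ → K} {y : J → μ → K}
    (hxy : AlgebraicIndependent R (Sum.elim (uncurry x) (uncurry y)))
    (hrow : ∀ i, #{e | row e = i} ≤ Fintype.card μ)
    (hι : Fintype.card ι ≤ Fintype.card κ * Fintype.card μ) :
    LinearIndependent K fun e => tensorVec (x (row e)) (y (col e)) := by
  let L := FractionRing (MvPolynomial I K)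
  have ht : Injective fun i => algebraMap (MvPolynomial I K) L (MvPolynomial.X i) :=
    (IsFractionRing.injective _ _).comp MvPolynomial.X_injective
  obtain ⟨u, v, huv⟩ := exists_linearIndependent_tensorVec ht hcol hrow hι
  let w (e : ι) (kl : κ × μ) : MvPolynomial ((I × κ) ⊕ (J × μ)) R :=
    MvPolynomial.X (Sum.inl (row e, kl.1)) * MvPolynomial.X (Sum.inr (col e, kl.2))
  let φ := MvPolynomial.aeval (R := R) (Sum.elim (uncurry u) (uncurry v))
  let ψ := MvPolynomial.aeval (R := R) (Sum.elim (uncurry x) (uncurry y))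
  have hφ : (fun e kl => φ (w e kl)) = fun e => tensorVec (u (row e)) (v (col e)) := by
    funext e kl
    simp [w, φ, tensorVec_apply]
  have hψ : (fun e kl => ψ (w e kl)) = fun e => tensorVec (x (row e)) (y (col e)) := by
    funext e kl
    simp [w, ψ, tensorVec_apply]
  exact hψ ▸ linearIndependent_map_of_linearIndependent_map φ.toRingHom
    (ψ := ψ.toRingHom) hxy (hφ ▸ huv)

theorem linearIndependent_tensorVec_iff_of_algebraicIndependent [Fintype ι] {row : ι → I}
    {col : ι → J} (hcol : Injective col) {x : I → κ → K} {y : J → μ → K}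
    (hxy : AlgebraicIndependent R (Sum.elim (uncurry x) (uncurry y))) :
    (LinearIndependent K fun e => tensorVec (x (row e)) (y (col e))) ↔
      (∀ i, #{e | row e = i} ≤ Fintype.card μ) ∧
        Fintype.card ι ≤ Fintype.card κ * Fintype.card μ := by
  refine ⟨fun h => ⟨card_row_le_of_linearIndependent h, ?_⟩,
    fun h => linearIndependent_tensorVec_of_algebraicIndependent hcol hxy h.1 h.2⟩
  simpa only [Module.finrank_fintype_fun_eq_card, Fintype.card_prod] using
    h.fintype_card_le_finrank

theorem disjoint_case_general [Fintype I] {x : I → κ → K} {y : J → μ → K}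
    (hxy : AlgebraicIndependent R (Sum.elim (uncurry x) (uncurry y)))
    {A : I → Finset J} (hA : Pairwise (Disjoint on A)) :
    (LinearIndependent K fun e : {p : I × J | p.2 ∈ A p.1} => tensorVec (x e.1.1) (y e.1.2)) ↔
      (∀ i, #(A i) ≤ Fintype.card μ) ∧ ∑ i, #(A i) ≤ Fintype.card κ * Fintype.card μ := by
  let edge : (Σ i, A i) ≃ {p : I × J | p.2 ∈ A p.1} :=
    { toFun e := ⟨(e.1, e.2), e.2.2⟩
      invFun p := ⟨p.1.1, p.1.2, p.2⟩ }
  have hcol : Injective fun e : Σ i, A i => (e.2 : J) := by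
    rintro ⟨i, j, hj⟩ ⟨i', j', hj'⟩ (rfl : j = j')
    obtain rfl := hA.eq (Finset.not_disjoint_iff.mpr ⟨j, hj, hj'⟩)
    rfl
  have hrow (i : I) : #{e : Σ i, A i | e.1 = i} = #(A i) := by
    rw [← Fintype.card_subtype, Fintype.card_congr (Equiv.sigmaSubtype i), Fintype.card_coe]
  rw [← linearIndependent_equiv edge]
  refine (linearIndependent_tensorVec_iff_of_algebraicIndependent
    (row := Sigma.fst) hcol hxy).trans ?_
  simp only [hrow, Fintype.card_sigma, Fintype.card_coe]

end General

theorem algebraicIndependent_genericCoordinates (R I κ J μ : Type*) [CommRing R] :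
    let coord : (I × κ) ⊕ (J × μ) → FractionRing (MvPolynomial ((I × κ) ⊕ (J × μ)) R) :=
      algebraMap (MvPolynomial ((I × κ) ⊕ (J × μ)) R) _ ∘ MvPolynomial.X
    AlgebraicIndependent R (Sum.elim
      (uncurry fun i k => coord (.inl (i, k))) (uncurry fun j l => coord (.inr (j, l)))) := by
  intro coord
  have hcoord : AlgebraicIndependent R coord :=
    (MvPolynomial.algebraicIndependent_X _ R).map'
      (f := IsScalarTower.toAlgHom R _ (FractionRing (MvPolynomial ((I × κ) ⊕ (J × μ)) R)))
      (IsFractionRing.injective _ _)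
  rwa [← Sum.elim_comp_inl_inr coord] at hcoord

theorem disjoint_case (F : Type*) [Field F] (m n s r : ℕ) (hs : s ≤ m) (hr : r ≤ n)
    (A : Fin m → Finset (Fin n)) (hdisj : ∀ i j : Fin m, i ≠ j → Disjoint (A i) (A j)) :
    TensorIndep F m n s r {p : Fin m × Fin n | p.2 ∈ A p.1} ↔
      (∀ i, (A i).card ≤ r) ∧ ∑ i, (A i).card ≤ s * r := by
  simpa only [Fintype.card_fin] using! disjoint_case_general
    (algebraicIndependent_genericCoordinates F (Fin m) (Fin s) (Fin n) (Fin r)) hdisj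
end
end

section
/- Let F be a field and let m, n, r be integers with 1 ≤ m and 0 ≤ r ≤ n. Let A_1, …, A_m ⊆ [n] and set E = ∪_{i∈[m]} {i}×A_i ⊆ [m]×[n]. Then E is independent in the tensor matroid T_{m,n}(1,r,F) if and only if |A_i ∩ A_j| = 0 for all distinct i, j ∈ [m] and ∑_{i=1}^m |A_i| ≤ r. -/
open scoped Classical

noncomputable section

/-!
For `s = 1` the vector `u_i ⊗ v_j` is the nonzero scalar `X_i` times the generic vector `v_j` of
`K_F^r`, so `E` is independent exactly when the vectors `v_j`, taken once for each `(i, j) ∈ E`,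
are. This forbids repeating a column index `j`, which is disjointness of the `A_i`, and then asks
for at most `r` vectors: any `r` or fewer generic vectors in `K_F^r` are independent, because a
square matrix of algebraically independent entries is the specialization of the generic matrix along
an injective homomorphism and hence has nonzero determinant.
-/

section GenericRows

open Function

variable {R K ι κ μ : Type*} [CommRing R] [CommRing K] [Algebra R K]

theorem det_ne_zero_of_algebraicIndependent [Nontrivial R] [Fintype ι] [DecidableEq ι]
    {M : Matrix ι ι K} (hM : AlgebraicIndependent R fun p : ι × ι => M p.1 p.2) : M.det ≠ 0 := by
  rw [← Matrix.mvPolynomialX_mapMatrix_aeval R M, ← AlgHom.map_det]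
  exact (map_ne_zero_iff _ hM).mpr (Matrix.det_mvPolynomialX_ne_zero ι R)

variable [IsDomain K] [Fintype ι] [Fintype μ] {y : κ × μ → K}

theorem linearIndependent_rows_of_algebraicIndependent (hy : AlgebraicIndependent R y) {f : ι → κ}
    (hf : Injective f) (hcard : Fintype.card ι ≤ Fintype.card μ) :
    LinearIndependent K fun i l => y (f i, l) := by
  have : Nontrivial R := (algebraMap R K).domain_nontrivial
  obtain ⟨g⟩ : Nonempty (ι ↪ μ) := Embedding.nonempty_of_card_le hcard
  let minor : Matrix ι ι K := Matrix.of fun i i' => y (f i, g i')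
  have minor_generic : AlgebraicIndependent R fun p : ι × ι => minor p.1 p.2 :=
    hy.comp (Prod.map f g) (hf.prodMap g.injective)
  have minor_rows : LinearIndependent K minor.row :=
    Matrix.linearIndependent_rows_of_det_ne_zero
      (det_ne_zero_of_algebraicIndependent minor_generic)
  exact LinearIndependent.of_comp (LinearMap.funLeft K K g) minor_rows

theorem linearIndependent_rows_iff_of_algebraicIndependent (hy : AlgebraicIndependent R y)
    {f : ι → κ} : (LinearIndependent K fun i l => y (f i, l)) ↔
      Injective f ∧ Fintype.card ι ≤ Fintype.card μ := by
  refine ⟨fun h => ⟨?_, ?_⟩, fun h => linearIndependent_rows_of_algebraicIndependent hy h.1 h.2⟩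
  · exact Injective.of_comp (f := fun j l => y (j, l)) h.injective
  · simpa only [Module.finrank_fintype_fun_eq_card] using h.fintype_card_le_finrank

end GenericRows

section IncidenceSet

variable {ι β : Type*}

theorem injOn_snd_setOf_mem_iff {A : ι → Finset β} :
    {p : ι × β | p.2 ∈ A p.1}.InjOn Prod.snd ↔ ∀ i j, i ≠ j → Disjoint (A i) (A j) := by
  simp only [Finset.disjoint_left]
  constructor
  · intro h i j hij b hi hj
    exact hij (congrArg Prod.fst (h (x₁ := (i, b)) (x₂ := (j, b)) hi hj rfl))
  · rintro h ⟨i, b⟩ hi ⟨j, _⟩ hj rfl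
    by_contra hne
    exact h i j (fun hij => hne (congrArg (·, b) hij)) hi hj

theorem ncard_setOf_mem_eq_sum_card [Fintype ι] (A : ι → Finset β) :
    {p : ι × β | p.2 ∈ A p.1}.ncard = ∑ i, (A i).card :=
  calc {p : ι × β | p.2 ∈ A p.1}.ncard
      = Nat.card (Σ i, A i) :=
        Nat.card_congr (Equiv.subtypeProdEquivSigmaSubtype fun i b => b ∈ A i)
    _ = ∑ i, (A i).card := by
        simp only [Nat.card_eq_fintype_card, Fintype.card_sigma, Fintype.card_coe]

end IncidenceSet

section TensorMatroid

variable (F : Type*) [Field F] (m n s r : ℕ)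

/-- The variables `X i k` and `Y j l`, as elements of `TField F m n s r`. -/
def tvar (v : (Fin m × Fin s) ⊕ (Fin n × Fin r)) : TField F m n s r :=
  algebraMap (MvPolynomial _ F) (TField F m n s r) (MvPolynomial.X v)

theorem algebraicIndependent_tvar : AlgebraicIndependent F (tvar F m n s r) :=
  (MvPolynomial.algebraicIndependent_X _ F).map'
    (f := IsScalarTower.toAlgHom F (MvPolynomial _ F) (TField F m n s r))
    (IsFractionRing.injective _ _)

theorem tensorIndep_one_iff_linearIndependent (E : Set (Fin m × Fin n)) :
    TensorIndep F m n 1 r E ↔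
      LinearIndependent (TField F m n 1 r)
        fun (e : E) (l : Fin r) => tvar F m n 1 r (Sum.inr (e.1.2, l)) := by
  let x (e : E) : (TField F m n 1 r)ˣ :=
    Units.mk0 (tvar F m n 1 r (Sum.inl (e.1.1, 0)))
      ((algebraicIndependent_tvar F m n 1 r).ne_zero _)
  let dropFactor : (Fin 1 × Fin r → TField F m n 1 r) ≃ₗ[TField F m n 1 r]
      (Fin r → TField F m n 1 r) :=
    LinearEquiv.funCongrLeft _ _ (Equiv.uniqueProd (Fin r) (Fin 1)).symm
  rw [← LinearIndependent.units_smul_iff _ x, TensorIndep,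
    ← dropFactor.toLinearMap.linearIndependent_iff dropFactor.ker]
  rfl

theorem case_s_eq_one_general (E : Set (Fin m × Fin n)) :
    TensorIndep F m n 1 r E ↔ E.InjOn Prod.snd ∧ E.ncard ≤ r := by
  have hY : AlgebraicIndependent F fun p : Fin n × Fin r => tvar F m n 1 r (Sum.inr p) :=
    (algebraicIndependent_tvar F m n 1 r).comp Sum.inr Sum.inr_injective
  rw [tensorIndep_one_iff_linearIndependent,
    linearIndependent_rows_iff_of_algebraicIndependent hY (f := fun e : E => e.1.2),
    Set.injOn_iff_injective, Fintype.card_fin, ← Nat.card_eq_fintype_card, Nat.card_coe_set_eq]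
  rfl

end TensorMatroid

theorem case_s_eq_one (F : Type*) [Field F] (m n r : ℕ) (hm : 1 ≤ m) (hr : r ≤ n)
    (A : Fin m → Finset (Fin n)) :
    TensorIndep F m n 1 r {p : Fin m × Fin n | p.2 ∈ A p.1} ↔
      (∀ i j : Fin m, i ≠ j → (A i ∩ A j).card = 0) ∧ ∑ i, (A i).card ≤ r := by
  simp only [case_s_eq_one_general, injOn_snd_setOf_mem_iff, ncard_setOf_mem_eq_sum_card,
    Finset.card_eq_zero, Finset.disjoint_iff_inter_eq_empty]
end
end
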